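/- Under a scaling of the heterogeneous key predistribution model with on/off channels satisfying the scaling condition Λ_1(n) = α_n λ_1(n) = c_n (log n)/n with lim_{n→∞} c_n = c, if c > 1 and in addition P_n ≥ σ n for all n for some σ > 0 and p_11(n) = ω(1/(n α_n)) (i.e., n α_n p_11(n) → ∞), then the probability that the random graph G(n; μ, K_n, P_n, α_n) is connected tends to 1 as n → ∞. -/

import Mathlib

/-!
A graph that is not connected has a nonempty set `S` of at most half of the vertices with no edge
to its complement, so it suffices to bound the expected number of such cuts (`exists_noCut`).

The key rings of `S` must not overlap too much for this to work. Since `n α p₁₁ → ∞` and `P ≥ σ n`,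
the smallest ring size `K₁` tends to infinity (`tendsto_ring_size`). A first moment estimate over
pairs (vertex set, set of keys) then shows that, with high probability, every set `T` of vertices
jointly holds at least `min ((1 - ε) |T| K₁) (η P)` keys (`pr_rings_subset_le`,
`small_union_term`).

For a fixed `S` with `l` vertices, condition on the rings inside `S`; the outside vertices are then
independent of each other. A vertex outside `S` of class `j` sees a random set `T ⊆ S` of on-channels
and has no neighbour in `S` iff its ring avoids all keys held by `T`. The avoidance probability
decays geometrically in the number of keys held by `T`, so averaging over `T` with the binomial
theorem gives `missBound`, and `pr_not_connected_le` is the resulting bound for the probability of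
not being connected.

It remains to sum `n.choose l * missBound l ^ (n - l)` over `1 ≤ l ≤ n / 2`, writing `Λ = α λ₁`.
* If `l Λ` is small, `missBound l` is essentially `exp (- l Λ)` and the term is at most
  `n ^ (-κ l)`, because `n Λ = cₙ log n` with `cₙ → c > 1` (`cut_term_small`).
* If `l Λ` is not small but `l ≤ δ n`, `missBound l` is bounded away from `1`, which beats the
  number of sets `S` (`cut_term_medium`).
* If `l > δ n`, then `l α p₁₁ → ∞` makes `missBound l` at most `1 / 16`, while there are only
  `2 ^ n` sets (`cut_term_large`).
-/


open Filter

/-- Probability that a uniformly random `b`-subset of a `P`-set avoids a fixed `a`-subset. -/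
noncomputable def avoidProb (P a b : ℕ) : ℝ := ((P - a).choose b : ℝ) / (P.choose b : ℝ)

/-- `p_{ab}` : probability that independent uniformly random key rings of sizes
`a` and `b` (from a pool of size `P`) intersect. -/
noncomputable def pEdge (P a b : ℕ) : ℝ := 1 - avoidProb P a b

/-- `λ_i` : mean edge probability of a class-`i` node in the inhomogeneous random key graph. -/
noncomputable def lamb {r : ℕ} (μ : Fin (r + 1) → ℝ) (K : Fin (r + 1) → ℕ) (P : ℕ)
    (i : Fin (r + 1)) : ℝ :=
  ∑ j, μ j * pEdge P (K i) (K j)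

/-- A configuration of the model: a class for each vertex, a key ring for each vertex,
and an on/off state for each (unordered) channel. -/
abbrev Config (n r P : ℕ) := (Fin n → Fin (r + 1)) × (Fin n → Finset (Fin P)) × (Sym2 (Fin n) → Bool)

/-- Probability weight of a configuration: classes are i.i.d. with law `μ`; given its class `i`,
a vertex's key ring is uniform among the `C(P, K i)` subsets of size `K i`; channels over
distinct pairs are i.i.d. Bernoulli(`α`) (diagonal channel variables are forced to `false`). -/
noncomputable def wt {n r P : ℕ} (μ : Fin (r + 1) → ℝ) (K : Fin (r + 1) → ℕ) (α : ℝ)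
    (c : Config n r P) : ℝ :=
  (∏ x : Fin n, μ (c.1 x)) *
    (∏ x : Fin n, if (c.2.1 x).card = K (c.1 x) then ((P.choose (K (c.1 x)) : ℝ))⁻¹ else 0) *
    (∏ e : Sym2 (Fin n),
      if e.IsDiag then (if c.2.2 e then 0 else 1) else (if c.2.2 e then α else 1 - α))

open Classical in
/-- Probability of an event under the heterogeneous key predistribution model
with on/off channels. -/
noncomputable def pr {n r P : ℕ} (μ : Fin (r + 1) → ℝ) (K : Fin (r + 1) → ℕ) (α : ℝ)
    (E : Config n r P → Prop) : ℝ :=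
  ∑ c : Config n r P, if E c then wt μ K α c else 0

/-- Two vertices are adjacent iff their key rings intersect and the channel between them is on. -/
def Adj {n r P : ℕ} (c : Config n r P) (x y : Fin n) : Prop :=
  x ≠ y ∧ ((c.2.1 x) ∩ (c.2.1 y)).Nonempty ∧ c.2.2 s(x, y) = true

/-- The random graph `G(n; μ, K, P, α)` as a simple graph. -/
def graphOf {n r P : ℕ} (c : Config n r P) : SimpleGraph (Fin n) :=
  SimpleGraph.fromRel (fun x y => ((c.2.1 x) ∩ (c.2.1 y)).Nonempty ∧ c.2.2 s(x, y) = true)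

/-- A vertex is isolated if it has no neighbours. -/
def Isolated {n r P : ℕ} (c : Config n r P) (x : Fin n) : Prop := ∀ y, ¬ Adj c x y

/-- The graph has no isolated nodes. -/
def NoIsolatedNodes {n r P : ℕ} (c : Config n r P) : Prop := ∀ x, ¬ Isolated c x


/-! ### Avoidance probabilities of random subsets -/

lemma choose_mul_pow_le (m P k : ℕ) (h : m ≤ P) : m.choose k * P ^ k ≤ P.choose k * m ^ k := by
  induction k with
  | zero => simp
  | succ k ih =>
    have h1 := Nat.choose_succ_right_eq m k
    have h2 := Nat.choose_succ_right_eq P k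
    have h3 : (m - k) * P ≤ (P - k) * m := by
      rw [Nat.sub_mul, Nat.sub_mul, mul_comm P m]
      exact Nat.sub_le_sub_left (Nat.mul_le_mul_left k h) _
    refine Nat.le_of_mul_le_mul_right (c := k + 1) ?_ (Nat.succ_pos k)
    calc m.choose (k+1) * P ^ (k+1) * (k+1) = (m.choose (k+1) * (k+1)) * P ^ k * P := by ring
      _ = (m.choose k * P ^ k) * ((m - k) * P) := by rw [h1]; ring
      _ ≤ (P.choose k * m ^ k) * ((P - k) * m) := Nat.mul_le_mul ih h3
      _ = (P.choose k * (P - k)) * m ^ k * m := by ring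
      _ = P.choose (k+1) * m ^ (k+1) * (k+1) := by rw [← h2]; ring

lemma choose_div_le_pow (m P k : ℕ) (h : m ≤ P) (hk : k ≤ P) :
    (m.choose k : ℝ) / P.choose k ≤ ((m : ℝ) / P) ^ k := by
  have hc : (0 : ℝ) < P.choose k := by exact_mod_cast Nat.choose_pos hk
  rcases Nat.eq_zero_or_pos P with rfl | hP
  · obtain rfl : k = 0 := by omega
    simp
  have hP' : (0 : ℝ) < (P : ℝ) ^ k := by positivity
  rw [div_pow, div_le_div_iff₀ hc hP']
  have := choose_mul_pow_le m P k h
  rw [mul_comm ((m : ℝ) ^ k)]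
  exact_mod_cast this

lemma avoidProb_nonneg (P a b : ℕ) : 0 ≤ avoidProb P a b := by
  unfold avoidProb; positivity

lemma avoidProb_zero (P b : ℕ) (hb : b ≤ P) : avoidProb P 0 b = 1 := by
  have hc : (0 : ℝ) < P.choose b := by exact_mod_cast Nat.choose_pos hb
  simp [avoidProb, hc.ne']

lemma avoidProb_le_one (P a b : ℕ) : avoidProb P a b ≤ 1 := by
  unfold avoidProb
  apply div_le_one_of_le₀ _ (by positivity)
  exact_mod_cast Nat.choose_le_choose b (Nat.sub_le P a)

lemma avoidProb_succ (P u k : ℕ) (hu : u < P) :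
    avoidProb P (u + 1) k * ((P : ℝ) - u) = avoidProb P u k * ((P - u - k : ℕ) : ℝ) := by
  unfold avoidProb
  obtain ⟨d, rfl⟩ : ∃ d, P = u + 1 + d := ⟨P - u - 1, by omega⟩
  have h := Nat.choose_mul_succ_eq d k
  have e1 : u + 1 + d - (u + 1) = d := by omega
  have e2 : u + 1 + d - u = d + 1 := by omega
  rw [e1, e2]
  have h' : (d.choose k : ℝ) * (d + 1) = ((d + 1).choose k : ℝ) * ((d + 1 - k : ℕ) : ℝ) := by
    exact_mod_cast h
  push_cast
  rw [div_mul_eq_mul_div, div_mul_eq_mul_div, ← h']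
  congr 1; ring

/-- `avoidProb P u k` is a product of `u` factors that decrease in their index; this is the
factor with index `u`. -/
noncomputable def avoidFactor (P k u : ℕ) : ℝ := ((P - u - k : ℕ) : ℝ) / ((P : ℝ) - u)

lemma avoidProb_succ' (P u k : ℕ) (hu : u < P) :
    avoidProb P (u + 1) k = avoidProb P u k * avoidFactor P k u := by
  have hpos : (0 : ℝ) < (P : ℝ) - u := by
    have : (u : ℝ) < P := by exact_mod_cast hu
    linarith
  rw [avoidFactor, ← mul_div_assoc, ← avoidProb_succ P u k hu, mul_div_cancel_right₀ _ hpos.ne']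

lemma avoidFactor_nonneg (P k u : ℕ) (hu : u < P) : 0 ≤ avoidFactor P k u := by
  have : (u : ℝ) < P := by exact_mod_cast hu
  exact div_nonneg (Nat.cast_nonneg _) (by linarith)

lemma avoidFactor_anti (P k i u : ℕ) (hiu : i ≤ u) (hu : u < P) :
    avoidFactor P k u ≤ avoidFactor P k i := by
  have h1 : (u : ℝ) < P := by exact_mod_cast hu
  have h2 : (i : ℝ) ≤ u := by exact_mod_cast hiu
  rcases le_or_gt (P - u) k with h | h
  · have : P - u - k = 0 := by omega
    have h0 : avoidFactor P k u = 0 := by simp [avoidFactor, this]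
    rw [h0]; exact avoidFactor_nonneg _ _ _ (by omega)
  · unfold avoidFactor
    rw [div_le_div_iff₀ (by linarith) (by linarith)]
    have e1 : ((P - u - k : ℕ) : ℝ) = (P : ℝ) - u - k := by
      rw [Nat.cast_sub h.le, Nat.cast_sub hu.le]
    have e2 : ((P - i - k : ℕ) : ℝ) = (P : ℝ) - i - k := by
      rw [Nat.cast_sub (by omega), Nat.cast_sub (by omega)]
    rw [e1, e2]
    have : (0 : ℝ) ≤ k := Nat.cast_nonneg _
    nlinarith

lemma avoidFactor_pow_le (P k K u : ℕ) (hK : K ≤ u) (hu : u < P) (hk : k ≤ P) :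
    avoidFactor P k u ^ K ≤ avoidProb P K k := by
  induction K with
  | zero => simp [avoidProb_zero P k hk]
  | succ K ih =>
    rw [pow_succ, avoidProb_succ' P K k (by omega)]
    exact mul_le_mul (ih (by omega)) (avoidFactor_anti P k K u (by omega) hu)
      (avoidFactor_nonneg _ _ _ hu) (avoidProb_nonneg _ _ _)

/-- Log-concavity of the avoidance probability in the size of the avoided set. -/
lemma avoidProb_pow_le (P k K u : ℕ) (hK : K ≤ u) (hu : u ≤ P) (hk : k ≤ P) :
    avoidProb P u k ^ K ≤ avoidProb P K k ^ u := by
  induction u, hK using Nat.le_induction with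
  | base => exact le_rfl
  | succ u hKu ih =>
    rw [avoidProb_succ' P u k (by omega), mul_pow, pow_succ]
    exact mul_le_mul (ih (by omega)) (avoidFactor_pow_le P k K u hKu (by omega) hk)
      (pow_nonneg (avoidFactor_nonneg _ _ _ (by omega)) _) (pow_nonneg (avoidProb_nonneg _ _ _) _)

/-- If the union of `m` rings retains a fraction `1 - ε` of its maximal size `m * K`, avoiding it
is at most as likely as `m` independent avoidances with success probability `(1 - ε) p`. -/
lemma avoidProb_le_pow (P k K u m : ℕ) (ε : ℝ) (hε0 : 0 ≤ ε) (hε1 : ε ≤ 1) (hK0 : 1 ≤ K)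
    (hK : K ≤ u) (hu : u ≤ P) (hk : k ≤ P) (hum : (1 - ε) * m * K ≤ u) :
    avoidProb P u k ≤ (1 - (1 - ε) * pEdge P K k) ^ m := by
  set a := avoidProb P K k with ha
  have ha0 : 0 ≤ a := avoidProb_nonneg _ _ _
  have ha1 : a ≤ 1 := avoidProb_le_one _ _ _
  have hKr : (0 : ℝ) < K := by exact_mod_cast hK0
  have h1 : avoidProb P u k ≤ a ^ ((u : ℝ) / K) := by
    have h := avoidProb_pow_le P k K u hK hu hk
    have h2 : (avoidProb P u k ^ K) ^ ((K : ℝ)⁻¹) ≤ (a ^ u) ^ ((K : ℝ)⁻¹) :=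
      Real.rpow_le_rpow (pow_nonneg (avoidProb_nonneg _ _ _) _) h (by positivity)
    rw [Real.pow_rpow_inv_natCast (avoidProb_nonneg _ _ _) (by omega)] at h2
    rwa [← Real.rpow_natCast a u, ← Real.rpow_mul ha0, ← div_eq_mul_inv] at h2
  have hexp : (1 - ε) * m ≤ (u : ℝ) / K := by rwa [le_div_iff₀ hKr]
  have hb : a ^ (1 - ε) ≤ 1 - (1 - ε) * pEdge P K k := by
    have := rpow_one_add_le_one_add_mul_self (s := a - 1) (p := 1 - ε) (by linarith)
      (by linarith) (by linarith)
    have e : 1 + (a - 1) = a := by ring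
    rw [e] at this
    refine this.trans (le_of_eq ?_)
    rw [pEdge, ← ha]; ring
  have h3 : a ^ ((u : ℝ) / K) ≤ a ^ ((1 - ε) * m) := by
    rcases ha0.eq_or_lt with h0 | h0
    · rw [← h0, Real.zero_rpow (by
        have : (0 : ℝ) < u := by exact_mod_cast (by omega : 0 < u)
        positivity)]
      exact Real.rpow_nonneg le_rfl _
    · exact Real.rpow_le_rpow_of_exponent_ge h0 ha1 hexp
  calc avoidProb P u k ≤ a ^ ((1 - ε) * m) := h1.trans h3
    _ = (a ^ (1 - ε)) ^ m := by rw [Real.rpow_mul ha0, Real.rpow_natCast]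
    _ ≤ _ := pow_le_pow_left₀ (Real.rpow_nonneg ha0 _) hb _

lemma avoidProb_le_exp (P k u : ℕ) (η : ℝ) (hu : u ≤ P) (hk : k ≤ P) (hP : 0 < P)
    (h : η * P ≤ u) : avoidProb P u k ≤ Real.exp (-(η * k)) := by
  have hP' : (0 : ℝ) < P := by exact_mod_cast hP
  have h1 := choose_div_le_pow (P - u) P k (Nat.sub_le _ _) hk
  have h2 : (((P - u : ℕ) : ℝ) / P) ≤ Real.exp (-η) := by
    rw [Nat.cast_sub hu, sub_div, div_self hP'.ne']
    have h3 : η ≤ (u : ℝ) / P := by rwa [le_div_iff₀ hP']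
    have h4 := Real.add_one_le_exp (-η)
    linarith
  calc avoidProb P u k ≤ _ := h1
    _ ≤ Real.exp (-η) ^ k := pow_le_pow_left₀ (by positivity) h2 _
    _ = _ := by rw [← Real.exp_nat_mul]; congr 1; ring

lemma avoidProb_anti_right (P u k k' : ℕ) (hkk : k ≤ k') (hk' : k' ≤ P) :
    avoidProb P u k' ≤ avoidProb P u k := by
  induction k', hkk using Nat.le_induction with
  | base => exact le_rfl
  | succ j hj ih =>
    refine le_trans ?_ (ih (by omega))
    unfold avoidProb
    have c1 : (0 : ℝ) < P.choose j := by exact_mod_cast Nat.choose_pos (by omega)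
    have c2 : (0 : ℝ) < P.choose (j + 1) := by exact_mod_cast Nat.choose_pos hk'
    rw [div_le_div_iff₀ c2 c1]
    have h1 := Nat.choose_succ_right_eq (P - u) j
    have h2 := Nat.choose_succ_right_eq P j
    have : (P - u).choose (j + 1) * P.choose j ≤ (P - u).choose j * P.choose (j + 1) := by
      refine Nat.le_of_mul_le_mul_right (c := j + 1) ?_ (Nat.succ_pos j)
      calc (P - u).choose (j + 1) * P.choose j * (j + 1)
          = ((P - u).choose (j + 1) * (j + 1)) * P.choose j := by ring
        _ = (P - u).choose j * P.choose j * (P - u - j) := by rw [h1]; ring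
        _ ≤ (P - u).choose j * P.choose j * (P - j) :=
            Nat.mul_le_mul_left _ (by omega)
        _ = (P - u).choose j * (P.choose j * (P - j)) := by ring
        _ = _ := by rw [← h2]; ring
    exact_mod_cast this

lemma pEdge_nonneg (P a b : ℕ) : 0 ≤ pEdge P a b := by
  unfold pEdge; linarith [avoidProb_le_one P a b]

lemma pEdge_le_one (P a b : ℕ) : pEdge P a b ≤ 1 := by
  unfold pEdge; linarith [avoidProb_nonneg P a b]

lemma pEdge_le (P u k : ℕ) (hu : 2 * u ≤ P) (hk : k ≤ P) (hP : 0 < P) :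
    pEdge P u k ≤ 2 * u * k / P := by
  have hP' : (0 : ℝ) < P := by exact_mod_cast hP
  induction u with
  | zero => simp [pEdge, avoidProb_zero P k hk]
  | succ u ih =>
    have ih' := ih (by omega)
    have hf : 1 - 2 * k / P ≤ avoidFactor P k u := by
      unfold avoidFactor
      have h1 : (2 : ℝ) * u ≤ P := by exact_mod_cast (by omega : 2 * u ≤ P)
      have h2 : ((P : ℝ) - u - k) ≤ ((P - u - k : ℕ) : ℝ) := by
        have : P ≤ (P - u - k) + u + k := by omega
        have : (P : ℝ) ≤ ((P - u - k : ℕ) : ℝ) + u + k := by exact_mod_cast this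
        linarith
      have h3 : (0 : ℝ) < (P : ℝ) - u := by linarith
      rw [le_div_iff₀ h3]
      have : (k : ℝ) ≤ 2 * k / P * ((P : ℝ) - u) := by
        rw [div_mul_eq_mul_div, le_div_iff₀ hP']
        have : (0 : ℝ) ≤ k := Nat.cast_nonneg _
        nlinarith
      nlinarith
    have h0 := avoidProb_nonneg P u k
    have h1 := avoidProb_le_one P u k
    unfold pEdge at ih' ⊢
    rw [avoidProb_succ' P u k (by omega)]
    have e : 2 * ((u + 1 : ℕ) : ℝ) * k / P = 2 * u * k / P + 2 * k / P := by push_cast; ring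
    rw [e]
    have hq : (0 : ℝ) ≤ 2 * k / P := by positivity
    have := mul_le_mul_of_nonneg_left hf h0
    nlinarith

/-! ### The product structure of the model -/

section FiniteSums

variable {V A : Type*} [Fintype V] [DecidableEq V] [Fintype A]

/-- Under a product weight, the probability that every coordinate in `T` satisfies `p`. -/
lemma sum_prod_forall (w : A → ℝ) (hw1 : ∑ a, w a = 1) (T : Finset V) (p : A → Prop)
    [DecidablePred p] :
    ∑ f : V → A, (∏ x, w (f x)) * (if ∀ x ∈ T, p (f x) then 1 else 0)
      = (∑ a, w a * (if p a then 1 else 0)) ^ T.card := by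
  have h1 : ∀ f : V → A, (∏ x, w (f x)) * (if ∀ x ∈ T, p (f x) then (1 : ℝ) else 0)
      = ∏ x, (w (f x) * (if x ∈ T then (if p (f x) then 1 else 0) else 1)) := by
    intro f
    rw [Finset.prod_mul_distrib, Finset.prod_ite_mem, Finset.univ_inter, Finset.prod_ite_zero]
    simp
  simp_rw [h1]
  rw [← Fintype.prod_sum (fun x a => w a * (if x ∈ T then (if p a then (1 : ℝ) else 0) else 1))]
  have h2 : ∀ x, ∑ a, w a * (if x ∈ T then (if p a then (1 : ℝ) else 0) else 1)
      = if x ∈ T then ∑ a, w a * (if p a then 1 else 0) else 1 := by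
    intro x; split_ifs with h
    · rfl
    · simpa using hw1
  simp_rw [h2]
  rw [Finset.prod_ite_mem, Finset.univ_inter, Finset.prod_const]

/-- Conditioning on the coordinates in `S`: if for every admissible value of these coordinates each
coordinate outside `S` contributes a factor of mean at most `Q`, the total is at most
`Q ^ |Sᶜ|`. -/
lemma sum_split_le (w : A → ℝ) (hw0 : ∀ a, 0 ≤ w a) (hw1 : ∑ a, w a = 1) (S : Finset V)
    (G : (V → A) → Prop) [DecidablePred G] (ψ : (V → A) → A → ℝ)
    (hG : ∀ f f' : V → A, (∀ x ∈ S, f x = f' x) → (G f ↔ G f'))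
    (hψ : ∀ f f' : V → A, (∀ x ∈ S, f x = f' x) → ψ f = ψ f')
    (hψ0 : ∀ f a, 0 ≤ ψ f a) (Q : ℝ) (hQ0 : 0 ≤ Q)
    (hQ : ∀ f, G f → ∑ a, w a * ψ f a ≤ Q) :
    ∑ f : V → A, (∏ x, w (f x)) * (if G f then ∏ v ∈ Sᶜ, ψ f (f v) else 0)
      ≤ Q ^ (Fintype.card V - S.card) := by
  classical
  have hne : Nonempty A := by
    by_contra h
    rw [not_nonempty_iff] at h
    simp at hw1
  obtain ⟨a0⟩ := hne
  let e := Equiv.piEquivPiSubtypeProd (fun x => x ∈ S) (fun _ : V => A)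
  let ext : ({x // x ∈ S} → A) → V → A := fun h x => if hx : x ∈ S then h ⟨x, hx⟩ else a0
  have hcard : Fintype.card {x // x ∉ S} = Fintype.card V - S.card := by
    rw [Fintype.card_subtype_compl]; simp
  rw [← e.symm.sum_comp, Fintype.sum_prod_type]
  have hterm : ∀ (h : {x // x ∈ S} → A) (g : {x // x ∉ S} → A),
      (∏ x, w (e.symm (h, g) x)) *
        (if G (e.symm (h, g)) then ∏ v ∈ Sᶜ, ψ (e.symm (h, g)) (e.symm (h, g) v) else 0)
      = (∏ x, w (h x)) * (if G (ext h) then ∏ v, (w (g v) * ψ (ext h) (g v)) else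
          0 * ∏ v, w (g v)) := by
    intro h g
    have hag : ∀ x ∈ S, e.symm (h, g) x = ext h x := by
      intro x hx
      simp [e, ext, hx, Equiv.piEquivPiSubtypeProd]
    rw [hψ _ _ hag]
    simp only [hG _ _ hag]
    have hS : ∀ x : {x // x ∈ S}, e.symm (h, g) x = h x := by
      intro x; simp [e, Equiv.piEquivPiSubtypeProd]
    have hSc : ∀ x : {x // x ∉ S}, e.symm (h, g) x = g x := by
      intro x; simp [e, Equiv.piEquivPiSubtypeProd, x.2]
    rw [← Fintype.prod_subtype_mul_prod_subtype (fun x => x ∈ S)]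
    simp only [hS, hSc]
    have hprod : ∏ v ∈ Sᶜ, ψ (ext h) (e.symm (h, g) v) = ∏ v : {x // x ∉ S}, ψ (ext h) (g v) := by
      rw [Finset.prod_subtype (p := fun x => x ∉ S) (F := inferInstance) Sᶜ (by simp)]
      simp only [hSc]
    rw [hprod]
    split_ifs
    · rw [Finset.prod_mul_distrib, mul_assoc]
      congr!
    · simp
  simp_rw [hterm]
  have hbound : ∀ h : {x // x ∈ S} → A,
      ∑ g : {x // x ∉ S} → A, (∏ x, w (h x)) *
        (if G (ext h) then ∏ v, (w (g v) * ψ (ext h) (g v)) else 0 * ∏ v, w (g v))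
      ≤ (∏ x, w (h x)) * Q ^ (Fintype.card V - S.card) := by
    intro h
    rw [← Finset.mul_sum]
    refine mul_le_mul_of_nonneg_left ?_ (Finset.prod_nonneg fun x _ => hw0 _)
    split_ifs with hg
    · rw [← Fintype.prod_sum (fun (_ : {x // x ∉ S}) a => w a * ψ (ext h) a), Finset.prod_const,
        Finset.card_univ, hcard]
      exact pow_le_pow_left₀ (Finset.sum_nonneg fun a _ => mul_nonneg (hw0 a) (hψ0 _ _))
        (hQ _ hg) _
    · simp only [zero_mul, Finset.sum_const_zero]
      positivity
  refine (Finset.sum_le_sum fun h _ => hbound h).trans ?_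
  rw [← Finset.sum_mul, ← Fintype.prod_sum (fun (_ : {x // x ∈ S}) a => w a)]
  simp [hw1]

end FiniteSums

/-- Law of the pair (class, key ring) of one vertex. -/
noncomputable def ringW {r P : ℕ} (μ : Fin (r + 1) → ℝ) (K : Fin (r + 1) → ℕ)
    (a : Fin (r + 1) × Finset (Fin P)) : ℝ :=
  μ a.1 * if a.2.card = K a.1 then ((P.choose (K a.1) : ℝ))⁻¹ else 0

/-- Law of one channel variable. -/
noncomputable def chanW {n : ℕ} (α : ℝ) (e : Sym2 (Fin n)) (b : Bool) : ℝ :=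
  if e.IsDiag then (if b then 0 else 1) else (if b then α else 1 - α)

section Model

variable {n r P : ℕ} (μ : Fin (r + 1) → ℝ) (K : Fin (r + 1) → ℕ) (α : ℝ)

lemma ringW_nonneg (hμ : ∀ i, 0 ≤ μ i) (a : Fin (r + 1) × Finset (Fin P)) :
    0 ≤ ringW μ K a := by
  unfold ringW
  refine mul_nonneg (hμ _) ?_
  split_ifs <;> positivity

lemma sum_ringW_subset (X : Finset (Fin P)) :
    ∑ a : Fin (r + 1) × Finset (Fin P), ringW μ K a * (if a.2 ⊆ X then 1 else 0)
      = ∑ j, μ j * ((X.card.choose (K j) : ℝ) / P.choose (K j)) := by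
  rw [Fintype.sum_prod_type]
  refine Finset.sum_congr rfl fun j _ => ?_
  have h : ∀ R : Finset (Fin P), ringW μ K (j, R) * (if R ⊆ X then (1 : ℝ) else 0)
      = μ j * (if R ∈ Finset.powersetCard (K j) X then ((P.choose (K j) : ℝ))⁻¹ else 0) := by
    intro R
    simp only [ringW, Finset.mem_powersetCard]
    by_cases h1 : R ⊆ X <;> by_cases h2 : R.card = K j <;> simp [h1, h2]
  simp_rw [h]
  rw [← Finset.mul_sum, Finset.sum_ite_mem, Finset.univ_inter, Finset.sum_const,
    Finset.card_powersetCard, nsmul_eq_mul, div_eq_mul_inv]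

lemma sum_ringW_disjoint (U : Finset (Fin P)) :
    ∑ a : Fin (r + 1) × Finset (Fin P), ringW μ K a * (if Disjoint U a.2 then 1 else 0)
      = ∑ j, μ j * avoidProb P U.card (K j) := by
  have h := sum_ringW_subset μ K Uᶜ
  rw [Finset.card_compl, Fintype.card_fin] at h
  unfold avoidProb
  rw [← h]
  refine Finset.sum_congr rfl fun a _ => ?_
  have : Disjoint U a.2 ↔ a.2 ⊆ Uᶜ := by
    rw [disjoint_comm]; exact le_compl_iff_disjoint_right.symm
  simp only [this]

lemma sum_ringW (hμsum : ∑ i, μ i = 1) (hK : ∀ j, K j ≤ P) :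
    ∑ a : Fin (r + 1) × Finset (Fin P), ringW μ K a = 1 := by
  have h := sum_ringW_subset μ K (Finset.univ : Finset (Fin P))
  simp only [Finset.subset_univ, if_true, mul_one, Finset.card_univ, Fintype.card_fin] at h
  rw [h, ← hμsum]
  refine Finset.sum_congr rfl fun j _ => ?_
  have hc : (P.choose (K j) : ℝ) ≠ 0 := by
    exact_mod_cast (Nat.choose_pos (hK j)).ne'
  rw [div_self hc, mul_one]

lemma wt_eq (f : Fin n → Fin (r + 1) × Finset (Fin P)) (B : Sym2 (Fin n) → Bool) :
    wt μ K α ((fun x => (f x).1, fun x => (f x).2, B) : Config n r P)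
      = (∏ x, ringW μ K (f x)) * ∏ e, chanW α e (B e) := by
  simp only [wt, ringW, chanW, Finset.prod_mul_distrib]

open Classical in
lemma pr_eq (E : Config n r P → Prop) :
    pr μ K α E = ∑ f : Fin n → Fin (r + 1) × Finset (Fin P), ∑ B : Sym2 (Fin n) → Bool,
      (∏ x, ringW μ K (f x)) * (∏ e, chanW α e (B e)) *
        (if E (fun x => (f x).1, fun x => (f x).2, B) then 1 else 0) := by
  unfold pr
  rw [Fintype.sum_prod_type]
  simp_rw [Fintype.sum_prod_type]
  rw [← (Equiv.arrowProdEquivProdArrow (Fin n) (fun _ => Fin (r + 1))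
    (fun _ => Finset (Fin P))).symm.sum_comp, Fintype.sum_prod_type]
  refine Finset.sum_congr rfl fun t _ => Finset.sum_congr rfl fun R _ =>
    Finset.sum_congr rfl fun B _ => ?_
  have h := wt_eq μ K α ((Equiv.arrowProdEquivProdArrow (Fin n) (fun _ => Fin (r + 1))
    (fun _ => Finset (Fin P))).symm (t, R)) B
  rw [← h]
  change (if E (t, R, B) then wt μ K α (t, R, B) else 0)
    = wt μ K α (t, R, B) * if E (t, R, B) then 1 else 0
  simp

lemma chanW_nonneg (h0 : 0 ≤ α) (h1 : α ≤ 1) (e : Sym2 (Fin n)) (b : Bool) : 0 ≤ chanW α e b := by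
  unfold chanW
  split_ifs <;> linarith

/-- Probability that all channels in a set of genuine pairs are off. -/
lemma sum_chanW_off (D : Finset (Sym2 (Fin n))) (hD : ∀ e ∈ D, ¬ e.IsDiag) :
    ∑ B : Sym2 (Fin n) → Bool, (∏ e, chanW α e (B e)) * (if ∀ e ∈ D, B e = false then 1 else 0)
      = (1 - α) ^ D.card := by
  have h1 : ∀ B : Sym2 (Fin n) → Bool,
      (∏ e, chanW α e (B e)) * (if ∀ e ∈ D, B e = false then (1 : ℝ) else 0)
      = ∏ e, (chanW α e (B e) * (if e ∈ D then (if B e = false then 1 else 0) else 1)) := by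
    intro B
    rw [Finset.prod_mul_distrib, Finset.prod_ite_mem, Finset.univ_inter, Finset.prod_ite_zero]
    simp
  simp_rw [h1]
  rw [← Fintype.prod_sum (fun e b => chanW α e b *
    (if e ∈ D then (if b = false then (1 : ℝ) else 0) else 1))]
  have h2 : ∀ e : Sym2 (Fin n), ∑ b : Bool, chanW α e b *
      (if e ∈ D then (if b = false then (1 : ℝ) else 0) else 1) = if e ∈ D then 1 - α else 1 := by
    intro e
    by_cases he : e ∈ D
    · simp [he, chanW, hD e he]
    · by_cases hd : e.IsDiag <;> simp [he, hd, chanW]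
  simp_rw [h2]
  rw [Finset.prod_ite_mem, Finset.univ_inter, Finset.prod_const]

lemma sum_chanW : ∑ B : Sym2 (Fin n) → Bool, ∏ e, chanW α e (B e) = 1 := by
  simpa using sum_chanW_off (n := n) α ∅ (by simp)

/-- No edge of the graph leaves `S`. -/
def NoCut (S : Finset (Fin n)) (c : Config n r P) : Prop :=
  ∀ x ∈ S, ∀ v ∈ Sᶜ, (c.2.1 x ∩ c.2.1 v).Nonempty → c.2.2 s(x, v) = false

open Classical in
lemma sum_chanW_noCut (S : Finset (Fin n)) (f : Fin n → Fin (r + 1) × Finset (Fin P)) :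
    ∑ B : Sym2 (Fin n) → Bool, (∏ e, chanW α e (B e)) *
        (if NoCut S ((fun x => (f x).1, fun x => (f x).2, B) : Config n r P) then 1 else 0)
      = ∏ v ∈ Sᶜ, ∏ x ∈ S, (if Disjoint (f x).2 (f v).2 then 1 else 1 - α) := by
  let C := (Sᶜ ×ˢ S).filter (fun q => ¬ Disjoint (f q.2).2 (f q.1).2)
  let D := C.image (fun q => s(q.2, q.1))
  have hmem : ∀ q ∈ C, q.1 ∉ S ∧ q.2 ∈ S := by
    intro q hq
    simp only [C, Finset.mem_filter, Finset.mem_product, Finset.mem_compl] at hq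
    exact hq.1
  have hD : ∀ e ∈ D, ¬ e.IsDiag := by
    intro e he
    obtain ⟨q, hq, rfl⟩ := Finset.mem_image.1 he
    have := hmem q hq
    rw [Sym2.mk_isDiag_iff]
    rintro h
    exact this.1 (h ▸ this.2)
  have hcard : D.card = C.card := by
    apply Finset.card_image_of_injOn
    rintro ⟨v, x⟩ hq ⟨v', x'⟩ hq' h
    have h1 := hmem _ hq
    have h2 := hmem _ hq'
    simp only [Sym2.eq_iff] at h
    rcases h with ⟨rfl, rfl⟩ | ⟨rfl, rfl⟩
    · rfl
    · exact absurd h2.2 h1.1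
  have hiff : ∀ B : Sym2 (Fin n) → Bool,
      NoCut S ((fun x => (f x).1, fun x => (f x).2, B) : Config n r P) ↔ ∀ e ∈ D, B e = false := by
    intro B
    constructor
    · intro h e he
      obtain ⟨q, hq, rfl⟩ := Finset.mem_image.1 he
      have h1 := hmem q hq
      refine h q.2 h1.2 q.1 (by simpa using h1.1) ?_
      have := (Finset.mem_filter.1 hq).2
      rwa [Finset.not_disjoint_iff_nonempty_inter] at this
    · intro h x hx v hv hne
      refine h _ (Finset.mem_image.2 ⟨(v, x), ?_, rfl⟩)
      refine Finset.mem_filter.2 ⟨Finset.mem_product.2 ⟨hv, hx⟩, ?_⟩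
      rwa [Finset.not_disjoint_iff_nonempty_inter]
  simp only [hiff]
  have := sum_chanW_off α D hD
  rw [this, hcard, ← Finset.prod_product', ← Finset.prod_const, Finset.prod_filter]
  refine Finset.prod_congr rfl fun q _ => ?_
  by_cases h : Disjoint (f q.2).2 (f q.1).2 <;> simp [h]

end Model

/-! ### The first moment bound over cuts -/

section Core

variable {n r P : ℕ} (μ : Fin (r + 1) → ℝ) (K : Fin (r + 1) → ℕ) (α : ℝ)

/-- Every nonempty set `T` of vertices of `S` jointly holds at least `k` and more than `m |T|`
keys. -/
def Spread (k : ℕ) (m : ℕ → ℕ) (S : Finset (Fin n)) (R : Fin n → Finset (Fin P)) : Prop :=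
  ∀ T ⊆ S, T.Nonempty → k ≤ (T.biUnion R).card ∧ m T.card < (T.biUnion R).card

/-- The bound for the probability that a vertex outside a set `S` with `l` vertices and spread-out
key rings has no neighbour in `S`. -/
noncomputable def missBound (P : ℕ) (ε : ℝ) (l : ℕ) : ℝ :=
  ∑ j, μ j * (ε + (1 - ε) * (1 - α * ((1 - ε) * pEdge P (K 0) (K j))) ^ l)

/-- The two cases of the minimum in `hm`: either the union of `l` rings is almost as large as
possible, or it is a fixed fraction of the pool and a long ring misses it with probability at
most `ε`. -/
lemma avoidProb_union_le (k k0 u l m : ℕ) (ε η : ℝ) (hε0 : 0 ≤ ε) (hε1 : ε ≤ 1)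
    (hη : 0 ≤ η) (hk0 : 1 ≤ k0) (hkk : k0 ≤ k) (hkP : k ≤ P) (hku : k0 ≤ u) (huP : u ≤ P)
    (hmu : m < u) (hm : min ((1 - ε) * l * k0) (η * P) ≤ m + 1)
    (hexp : Real.exp (-(η * k0)) ≤ ε) :
    avoidProb P u k ≤ ε + (1 - ε) * (1 - (1 - ε) * pEdge P k0 k) ^ l := by
  have hp0 := pEdge_nonneg P k0 k
  have hp1 := pEdge_le_one P k0 k
  have hy0 : 0 ≤ 1 - (1 - ε) * pEdge P k0 k := by nlinarith
  have hy1 : 1 - (1 - ε) * pEdge P k0 k ≤ 1 := by nlinarith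
  have hyl0 := pow_nonneg hy0 l
  have hyl1 := pow_le_one₀ (n := l) hy0 hy1
  have hmu' : (m : ℝ) + 1 ≤ u := by exact_mod_cast hmu
  rcases min_le_iff.1 (hm.trans hmu') with h | h
  · have := avoidProb_le_pow P k k0 u l ε hε0 hε1 hk0 hku huP hkP h
    nlinarith
  · have h1 := avoidProb_le_exp P k u η huP hkP (by omega) h
    have h2 : Real.exp (-(η * k)) ≤ Real.exp (-(η * k0)) := by
      apply Real.exp_le_exp.2
      have : (k0 : ℝ) ≤ k := by exact_mod_cast hkk
      nlinarith
    have : 0 ≤ (1 - ε) * (1 - (1 - ε) * pEdge P k0 k) ^ l := mul_nonneg (by linarith) hyl0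
    linarith

/-- Averaging first over the set `T ⊆ S` of vertices whose channel to the outside vertex is on, the
outside vertex has no neighbour in `S` iff its ring avoids the union of the rings in `T`. -/
lemma sum_miss_le (hμ : ∀ i, 0 ≤ μ i) (hα0 : 0 ≤ α) (hα1 : α ≤ 1)
    (hK1 : 1 ≤ K 0) (hK0 : ∀ j, K 0 ≤ K j) (hKP : ∀ j, K j ≤ P)
    (m : ℕ → ℕ) (ε η : ℝ) (hε0 : 0 ≤ ε) (hε1 : ε ≤ 1) (hη : 0 ≤ η)
    (hm : ∀ l : ℕ, min ((1 - ε) * l * K 0) (η * P) ≤ m l + 1)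
    (hexp : Real.exp (-(η * K 0)) ≤ ε)
    (S : Finset (Fin n)) (R : Fin n → Finset (Fin P)) (hS : Spread (K 0) m S R) :
    ∑ a : Fin (r + 1) × Finset (Fin P), ringW μ K a *
        ∏ x ∈ S, (if Disjoint (R x) a.2 then 1 else 1 - α)
      ≤ missBound μ K α P ε S.card := by
  have h1 : ∀ a : Fin (r + 1) × Finset (Fin P),
      ∏ x ∈ S, (if Disjoint (R x) a.2 then (1 : ℝ) else 1 - α)
      = ∑ T ∈ S.powerset, α ^ T.card * (1 - α) ^ (S.card - T.card) *
          (if Disjoint (T.biUnion R) a.2 then 1 else 0) := by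
    intro a
    have : ∀ x, (if Disjoint (R x) a.2 then (1 : ℝ) else 1 - α)
        = α * (if Disjoint (R x) a.2 then 1 else 0) + (1 - α) := by
      intro x; split_ifs <;> ring
    simp_rw [this]
    rw [Finset.prod_add]
    refine Finset.sum_congr rfl fun T hT => ?_
    rw [Finset.prod_mul_distrib, Finset.prod_const, Finset.prod_const,
      Finset.card_sdiff_of_subset (Finset.mem_powerset.1 hT), Finset.prod_ite_zero]
    simp only [Finset.disjoint_biUnion_left, Finset.prod_const_one]
    ring
  have h2 : ∑ a : Fin (r + 1) × Finset (Fin P), ringW μ K a *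
        ∏ x ∈ S, (if Disjoint (R x) a.2 then 1 else 1 - α)
      = ∑ T ∈ S.powerset, α ^ T.card * (1 - α) ^ (S.card - T.card) *
          ∑ j, μ j * avoidProb P (T.biUnion R).card (K j) := by
    simp_rw [h1, Finset.mul_sum]
    rw [Finset.sum_comm]
    refine Finset.sum_congr rfl fun T _ => ?_
    rw [← Finset.mul_sum, ← sum_ringW_disjoint, Finset.mul_sum]
    refine Finset.sum_congr rfl fun a _ => ?_
    ring
  have h3 : ∀ T ∈ S.powerset, ∀ j, avoidProb P (T.biUnion R).card (K j)
      ≤ ε + (1 - ε) * (1 - (1 - ε) * pEdge P (K 0) (K j)) ^ T.card := by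
    intro T hT j
    rcases T.eq_empty_or_nonempty with rfl | hne
    · simp [avoidProb_zero P (K j) (hKP j)]
    · obtain ⟨ha, hb⟩ := hS T (Finset.mem_powerset.1 hT) hne
      refine avoidProb_union_le (K j) (K 0) _ _ (m T.card) ε η hε0 hε1 hη hK1 (hK0 j) (hKP j) ha
        ?_ hb (hm _) hexp
      simpa using Finset.card_le_univ (T.biUnion R)
  rw [h2]
  calc _ ≤ ∑ T ∈ S.powerset, α ^ T.card * (1 - α) ^ (S.card - T.card) *
          ∑ j, μ j * (ε + (1 - ε) * (1 - (1 - ε) * pEdge P (K 0) (K j)) ^ T.card) := by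
        refine Finset.sum_le_sum fun T hT => mul_le_mul_of_nonneg_left ?_ ?_
        · exact Finset.sum_le_sum fun j _ => mul_le_mul_of_nonneg_left (h3 T hT j) (hμ j)
        · exact mul_nonneg (pow_nonneg hα0 _) (pow_nonneg (by linarith) _)
    _ = missBound μ K α P ε S.card := by
        unfold missBound
        simp_rw [Finset.mul_sum]
        rw [Finset.sum_comm]
        refine Finset.sum_congr rfl fun j _ => ?_
        set y := 1 - (1 - ε) * pEdge P (K 0) (K j) with hy
        have e1 := Finset.sum_pow_mul_eq_add_pow α (1 - α) S
        have e2 := Finset.sum_pow_mul_eq_add_pow (α * y) (1 - α) S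
        have e3 : 1 - α * ((1 - ε) * pEdge P (K 0) (K j)) = α * y + (1 - α) := by rw [hy]; ring
        rw [e3, ← e2]
        have e4 : α + (1 - α) = 1 := by ring
        rw [e4, one_pow] at e1
        calc _ = ∑ T ∈ S.powerset, (μ j * ε * (α ^ T.card * (1 - α) ^ (S.card - T.card))
              + μ j * (1 - ε) * ((α * y) ^ T.card * (1 - α) ^ (S.card - T.card))) := by
              refine Finset.sum_congr rfl fun T _ => ?_
              rw [mul_pow]; ring
          _ = _ := by
              rw [Finset.sum_add_distrib, ← Finset.mul_sum, ← Finset.mul_sum, e1]; ring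

lemma wt_nonneg (hμ : ∀ i, 0 ≤ μ i) (hα0 : 0 ≤ α) (hα1 : α ≤ 1) (c : Config n r P) :
    0 ≤ wt μ K α c := by
  have h := wt_eq μ K α (fun x => (c.1 x, c.2.1 x)) c.2.2
  change wt μ K α c = _ at h
  rw [h]
  exact mul_nonneg (Finset.prod_nonneg fun x _ => ringW_nonneg μ K hμ _)
    (Finset.prod_nonneg fun e _ => chanW_nonneg α hα0 hα1 _ _)

lemma pr_le_add (hμ : ∀ i, 0 ≤ μ i) (hα0 : 0 ≤ α) (hα1 : α ≤ 1) (E E₁ E₂ : Config n r P → Prop)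
    (h : ∀ c, wt μ K α c ≠ 0 → E c → E₁ c ∨ E₂ c) :
    pr μ K α E ≤ pr μ K α E₁ + pr μ K α E₂ := by
  classical
  unfold pr
  rw [← Finset.sum_add_distrib]
  refine Finset.sum_le_sum fun c _ => ?_
  have h0 := wt_nonneg μ K α hμ hα0 hα1 c
  by_cases hw : wt μ K α c = 0
  · simp [hw]
  by_cases hE : E c
  · rcases h c hw hE with h' | h'
    · simp only [hE, h', if_true]; split_ifs <;> linarith
    · simp only [hE, h', if_true]; split_ifs <;> linarith
  · simp only [hE, if_false]; split_ifs <;> linarith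

lemma pr_le_sum (hμ : ∀ i, 0 ≤ μ i) (hα0 : 0 ≤ α) (hα1 : α ≤ 1) {ι : Type*} (s : Finset ι)
    (E : Config n r P → Prop) (F : ι → Config n r P → Prop)
    (h : ∀ c, E c → ∃ i ∈ s, F i c) :
    pr μ K α E ≤ ∑ i ∈ s, pr μ K α (F i) := by
  classical
  unfold pr
  rw [Finset.sum_comm]
  refine Finset.sum_le_sum fun c _ => ?_
  have h0 := wt_nonneg μ K α hμ hα0 hα1 c
  have hnn : ∀ i ∈ s, 0 ≤ (if F i c then wt μ K α c else 0) := by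
    intro i _; split_ifs <;> linarith
  split_ifs with hE
  · obtain ⟨i, hi, hF⟩ := h c hE
    have := Finset.single_le_sum hnn hi
    simpa [hF] using this
  · exact Finset.sum_nonneg hnn

lemma pr_not (hμsum : ∑ i, μ i = 1) (hK : ∀ j, K j ≤ P) (E : Config n r P → Prop) :
    pr μ K α E = 1 - pr μ K α (fun c => ¬ E c) := by
  classical
  have h1 : pr μ K α (fun _ : Config n r P => True) = 1 := by
    rw [pr_eq]
    simp only [if_true, mul_one]
    simp_rw [← Finset.mul_sum, sum_chanW, mul_one]
    rw [← Fintype.prod_sum (fun (_ : Fin n) a => ringW μ K a), sum_ringW μ K hμsum hK]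
    simp
  have h2 : pr μ K α E + pr μ K α (fun c => ¬ E c) = pr μ K α (fun _ : Config n r P => True) := by
    unfold pr
    rw [← Finset.sum_add_distrib]
    refine Finset.sum_congr rfl fun c _ => ?_
    by_cases h : E c <;> simp [h]
  linarith

lemma card_ring_of_wt_ne_zero (c : Config n r P) (h : wt μ K α c ≠ 0) (x : Fin n) :
    (c.2.1 x).card = K (c.1 x) := by
  by_contra hne
  apply h
  unfold wt
  rw [Finset.prod_eq_zero (i := x) (s := Finset.univ) (Finset.mem_univ x)
    (f := fun x => if (c.2.1 x).card = K (c.1 x) then ((P.choose (K (c.1 x)) : ℝ))⁻¹ else 0)]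
  · simp
  · simp [hne]

lemma pr_rings_subset_le (hμ : ∀ i, 0 ≤ μ i) (hμsum : ∑ i, μ i = 1)
    (hK0 : ∀ j, K 0 ≤ K j) (hKP : ∀ j, K j ≤ P) (T : Finset (Fin n)) (X : Finset (Fin P)) :
    pr μ K α (fun c : Config n r P => ∀ x ∈ T, c.2.1 x ⊆ X)
      ≤ (((X.card : ℝ) / P) ^ K 0) ^ T.card := by
  classical
  rw [pr_eq]
  have h1 : ∀ f : Fin n → Fin (r + 1) × Finset (Fin P),
      ∑ B : Sym2 (Fin n) → Bool, (∏ x, ringW μ K (f x)) * (∏ e, chanW α e (B e)) *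
        (if ∀ x ∈ T, (f x).2 ⊆ X then 1 else 0)
      = (∏ x, ringW μ K (f x)) * (if ∀ x ∈ T, (f x).2 ⊆ X then 1 else 0) := by
    intro f
    rw [← Finset.sum_mul, ← Finset.mul_sum, sum_chanW, mul_one]
  have h2 := sum_prod_forall (V := Fin n) (ringW (P := P) μ K) (sum_ringW μ K hμsum hKP) T
    (fun a => a.2 ⊆ X)
  refine le_trans (le_of_eq ?_) (le_trans (le_of_eq h2) ?_)
  · refine Finset.sum_congr rfl fun f _ => ?_
    convert h1 f
  have hXP : X.card ≤ P := by simpa using Finset.card_le_univ X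
  have hX1 : (X.card : ℝ) / P ≤ 1 :=
    div_le_one_of_le₀ (by exact_mod_cast hXP) (Nat.cast_nonneg _)
  refine pow_le_pow_left₀ (Finset.sum_nonneg fun a _ => mul_nonneg (ringW_nonneg μ K hμ a) ?_) ?_ _
  · split_ifs <;> norm_num
  rw [sum_ringW_subset]
  calc ∑ j, μ j * ((X.card.choose (K j) : ℝ) / P.choose (K j))
      ≤ ∑ j, μ j * ((X.card : ℝ) / P) ^ K 0 := by
        refine Finset.sum_le_sum fun j _ => mul_le_mul_of_nonneg_left ?_ (hμ j)
        exact (choose_div_le_pow _ _ _ hXP (hKP j)).trans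
          (pow_le_pow_of_le_one (by positivity) hX1 (hK0 j))
    _ = _ := by rw [← Finset.sum_mul, hμsum, one_mul]

/-- Given the rings inside `S`, the outside vertices miss `S` independently of each other, each with
probability at most `missBound`. -/
lemma pr_noCut_le (hμ : ∀ i, 0 ≤ μ i) (hμsum : ∑ i, μ i = 1) (hα0 : 0 ≤ α) (hα1 : α ≤ 1)
    (hK1 : 1 ≤ K 0) (hK0 : ∀ j, K 0 ≤ K j) (hKP : ∀ j, K j ≤ P)
    (m : ℕ → ℕ) (ε η : ℝ) (hε0 : 0 ≤ ε) (hε1 : ε ≤ 1) (hη : 0 ≤ η)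
    (hm : ∀ l : ℕ, min ((1 - ε) * l * K 0) (η * P) ≤ m l + 1)
    (hexp : Real.exp (-(η * K 0)) ≤ ε) (S : Finset (Fin n)) :
    pr μ K α (fun c : Config n r P => Spread (K 0) m S c.2.1 ∧ NoCut S c)
      ≤ missBound μ K α P ε S.card ^ (n - S.card) := by
  classical
  rw [pr_eq]
  have h1 : ∀ f : Fin n → Fin (r + 1) × Finset (Fin P),
      ∑ B : Sym2 (Fin n) → Bool, (∏ x, ringW μ K (f x)) * (∏ e, chanW α e (B e)) *
        (if Spread (K 0) m S (fun x => (f x).2) ∧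
          NoCut S ((fun x => (f x).1, fun x => (f x).2, B) : Config n r P) then 1 else 0)
      = (∏ x, ringW μ K (f x)) * (if Spread (K 0) m S (fun x => (f x).2) then
          ∏ v ∈ Sᶜ, ∏ x ∈ S, (if Disjoint (f x).2 (f v).2 then 1 else 1 - α) else 0) := by
    intro f
    by_cases hs : Spread (K 0) m S (fun x => (f x).2)
    · simp only [hs, true_and, if_true, mul_assoc]
      rw [← Finset.mul_sum]
      congr 1
      exact sum_chanW_noCut α S f
    · simp [hs]
  have hL := Finset.sum_congr (rfl : Finset.univ = Finset.univ)
    (fun (f : Fin n → Fin (r + 1) × Finset (Fin P)) _ => h1 f)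
  refine le_trans (le_of_eq ?_) (le_trans (le_of_eq hL) ?_)
  · congr!
  have hm0 : 0 ≤ missBound μ K α P ε S.card := by
    unfold missBound
    refine Finset.sum_nonneg fun j _ => mul_nonneg (hμ j) ?_
    have hp0 := pEdge_nonneg P (K 0) (K j)
    have hp1 := pEdge_le_one P (K 0) (K j)
    have h2 : (1 - ε) * pEdge P (K 0) (K j) ≤ 1 := by nlinarith
    have h2' : 0 ≤ (1 - ε) * pEdge P (K 0) (K j) := mul_nonneg (by linarith) hp0
    have h3 : α * ((1 - ε) * pEdge P (K 0) (K j)) ≤ 1 := by nlinarith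
    have := mul_nonneg (by linarith : 0 ≤ 1 - ε) (pow_nonneg (by linarith : 0 ≤
      1 - α * ((1 - ε) * pEdge P (K 0) (K j))) S.card)
    linarith
  have := sum_split_le (V := Fin n) (ringW (P := P) μ K) (ringW_nonneg μ K hμ)
    (sum_ringW μ K hμsum hKP) S (fun f => Spread (K 0) m S (fun x => (f x).2))
    (fun f a => ∏ x ∈ S, (if Disjoint (f x).2 a.2 then 1 else 1 - α)) ?_ ?_ ?_
    (missBound μ K α P ε S.card) hm0 ?_
  · simpa using this
  · intro f f' hff
    have : ∀ T ⊆ S, T.biUnion (fun x => (f x).2) = T.biUnion (fun x => (f' x).2) := by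
      intro T hT
      exact Finset.biUnion_congr rfl fun x hx => by rw [hff x (hT hx)]
    unfold Spread
    refine forall_congr' fun T => ?_
    refine forall_congr' fun hT => ?_
    rw [this T hT]
  · intro f f' hff
    funext a
    exact Finset.prod_congr rfl fun x hx => by rw [hff x hx]
  · intro f a
    refine Finset.prod_nonneg fun x _ => ?_
    split_ifs <;> linarith
  · intro f hf
    exact sum_miss_le μ K α hμ hα0 hα1 hK1 hK0 hKP m ε η hε0 hε1 hη hm hexp S _ hf

lemma exists_noCut (hn : 1 ≤ n) (c : Config n r P) (h : ¬ (graphOf c).Connected) :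
    ∃ S : Finset (Fin n), 1 ≤ S.card ∧ 2 * S.card ≤ n ∧ NoCut S c := by
  classical
  have hne : Nonempty (Fin n) := ⟨⟨0, hn⟩⟩
  have hpre : ¬ (graphOf c).Preconnected := fun hp => h ⟨hp⟩
  unfold SimpleGraph.Preconnected at hpre
  push Not at hpre
  obtain ⟨x, y, hxy⟩ := hpre
  let S : Finset (Fin n) := Finset.univ.filter (fun z => (graphOf c).Reachable x z)
  have hx : x ∈ S := by simp [S]
  have hy : y ∈ Sᶜ := by simpa [S] using hxy
  have key : ∀ u ∈ S, ∀ v ∈ Sᶜ, (c.2.1 u ∩ c.2.1 v).Nonempty → c.2.2 s(u, v) = false := by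
    intro u hu v hv hne
    by_contra hb
    have hb' : c.2.2 s(u, v) = true := by simpa using hb
    have huv : u ≠ v := by
      rintro rfl
      exact (Finset.mem_compl.1 hv) hu
    have hadj : (graphOf c).Adj u v := by
      rw [graphOf, SimpleGraph.fromRel_adj]
      exact ⟨huv, Or.inl ⟨hne, hb'⟩⟩
    apply Finset.mem_compl.1 hv
    have hu' : (graphOf c).Reachable x u := by simpa [S] using hu
    simpa [S] using hu'.trans hadj.reachable
  have hc := Finset.card_add_card_compl S
  rw [Fintype.card_fin] at hc
  have h1 : 1 ≤ S.card := Finset.card_pos.2 ⟨x, hx⟩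
  have h2 : 1 ≤ Sᶜ.card := Finset.card_pos.2 ⟨y, hy⟩
  rcases le_total (2 * S.card) n with h | h
  · exact ⟨S, h1, h, key⟩
  · refine ⟨Sᶜ, h2, by omega, ?_⟩
    intro v hv u hu hne
    rw [Sym2.eq_swap]
    rw [compl_compl] at hu
    rw [Finset.inter_comm] at hne
    exact key u hu v hv hne

/-- Non-asymptotic bound: the first sum bounds the probability that some set of vertices holds too
few keys, the second that some set with spread-out rings and at most `n / 2` vertices has no edge
leaving it. -/
theorem pr_not_connected_le (hn : 1 ≤ n) (hμ : ∀ i, 0 ≤ μ i) (hμsum : ∑ i, μ i = 1)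
    (hα0 : 0 ≤ α) (hα1 : α ≤ 1)
    (hK1 : 1 ≤ K 0) (hK0 : ∀ j, K 0 ≤ K j) (hKP : ∀ j, K j ≤ P)
    (m : ℕ → ℕ) (ε η : ℝ) (hε0 : 0 ≤ ε) (hε1 : ε ≤ 1) (hη : 0 ≤ η)
    (hm : ∀ l : ℕ, min ((1 - ε) * l * K 0) (η * P) ≤ m l + 1) (hmP : ∀ l, m l ≤ P)
    (hexp : Real.exp (-(η * K 0)) ≤ ε) :
    pr μ K α (fun c : Config n r P => ¬ (graphOf c).Connected)
      ≤ (∑ l ∈ Finset.Icc 1 n, (n.choose l : ℝ) *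
            (P.choose (m l) * (((m l : ℝ) / P) ^ K 0) ^ l))
        + ∑ l ∈ (Finset.Icc 1 n).filter (fun l => 2 * l ≤ n),
            (n.choose l : ℝ) * missBound μ K α P ε l ^ (n - l) := by
  classical
  let Small : Config n r P → Prop := fun c =>
    ∃ T : Finset (Fin n), 1 ≤ T.card ∧ (T.biUnion c.2.1).card ≤ m T.card
  let Cut : Config n r P → Prop := fun c =>
    ∃ S : Finset (Fin n), (1 ≤ S.card ∧ 2 * S.card ≤ n) ∧ Spread (K 0) m S c.2.1 ∧ NoCut S c
  have hstep : pr μ K α (fun c : Config n r P => ¬ (graphOf c).Connected)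
      ≤ pr μ K α Small + pr μ K α Cut := by
    refine pr_le_add μ K α hμ hα0 hα1 _ _ _ fun c hw hc => ?_
    by_cases hsm : Small c
    · exact Or.inl hsm
    right
    obtain ⟨S, h1, h2, h3⟩ := exists_noCut hn c hc
    refine ⟨S, ⟨h1, h2⟩, ?_, h3⟩
    intro T _ hT
    constructor
    · obtain ⟨x, hx⟩ := hT
      calc K 0 ≤ K (c.1 x) := hK0 _
        _ = (c.2.1 x).card := (card_ring_of_wt_ne_zero μ K α c hw x).symm
        _ ≤ _ := Finset.card_le_card (Finset.subset_biUnion_of_mem c.2.1 hx)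
    · by_contra hlt
      exact hsm ⟨T, Finset.card_pos.2 hT, not_lt.1 hlt⟩
  have hcount : ∀ (p : ℕ → Prop) [DecidablePred p] (g : ℕ → ℝ),
      ∑ T ∈ (Finset.univ : Finset (Finset (Fin n))).filter (fun T => 1 ≤ T.card ∧ p T.card),
        g T.card = ∑ l ∈ (Finset.Icc 1 n).filter p, (n.choose l : ℝ) * g l := by
    intro p _ g
    rw [Finset.sum_filter, ← Finset.powerset_univ,
      Finset.sum_powerset_apply_card (fun l => if 1 ≤ l ∧ p l then g l else 0), Finset.card_univ,
      Fintype.card_fin]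
    have hI : (Finset.Icc 1 n).filter p = (Finset.range (n + 1)).filter (fun l => 1 ≤ l ∧ p l) := by
      ext l
      simp only [Finset.mem_filter, Finset.mem_Icc, Finset.mem_range]
      constructor
      · rintro ⟨⟨a, b⟩, c⟩; exact ⟨by omega, a, c⟩
      · rintro ⟨a, b, c⟩; exact ⟨⟨b, by omega⟩, c⟩
    rw [hI, Finset.sum_filter]
    refine Finset.sum_congr rfl fun l _ => ?_
    split_ifs <;> simp
  refine hstep.trans (add_le_add ?_ ?_)
  · let s : Finset (Finset (Fin n)) := Finset.univ.filter (fun T => 1 ≤ T.card ∧ True)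
    have h1 : pr μ K α Small ≤ ∑ T ∈ s, pr μ K α
        (fun c : Config n r P => (T.biUnion c.2.1).card ≤ m T.card) := by
      refine pr_le_sum μ K α hμ hα0 hα1 s _ _ fun c hc => ?_
      obtain ⟨T, hT1, hT2⟩ := hc
      exact ⟨T, by simpa [s] using hT1, hT2⟩
    have h2 : ∀ T : Finset (Fin n), pr μ K α
        (fun c : Config n r P => (T.biUnion c.2.1).card ≤ m T.card)
        ≤ P.choose (m T.card) * (((m T.card : ℝ) / P) ^ K 0) ^ T.card := by
      intro T
      have h3 := pr_le_sum μ K α hμ hα0 hα1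
        (Finset.powersetCard (m T.card) (Finset.univ : Finset (Fin P)))
        (fun c : Config n r P => (T.biUnion c.2.1).card ≤ m T.card)
        (fun X c => ∀ x ∈ T, c.2.1 x ⊆ X) ?_
      · refine h3.trans ?_
        calc _ ≤ ∑ X ∈ Finset.powersetCard (m T.card) (Finset.univ : Finset (Fin P)),
                (((m T.card : ℝ) / P) ^ K 0) ^ T.card := by
              refine Finset.sum_le_sum fun X hX => ?_
              have h4 := pr_rings_subset_le μ K α hμ hμsum hK0 hKP T X
              rwa [(Finset.mem_powersetCard.1 hX).2] at h4
          _ = _ := by simp [Finset.card_powersetCard]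
      · intro c hc
        obtain ⟨X, hX1, hX2⟩ := Finset.exists_superset_card_eq hc (by simpa using hmP T.card)
        exact ⟨X, by simp [Finset.mem_powersetCard, hX2], fun x hx =>
          (Finset.subset_biUnion_of_mem c.2.1 hx).trans hX1⟩
    refine h1.trans ((Finset.sum_le_sum fun T _ => h2 T).trans (le_of_eq ?_))
    rw [hcount (fun _ => True) (fun l => P.choose (m l) * (((m l : ℝ) / P) ^ K 0) ^ l)]
    simp
  · have h1 := pr_le_sum μ K α hμ hα0 hα1
      ((Finset.univ : Finset (Finset (Fin n))).filter (fun S => 1 ≤ S.card ∧ 2 * S.card ≤ n)) Cut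
      (fun S c => Spread (K 0) m S c.2.1 ∧ NoCut S c) ?_
    · refine h1.trans ((Finset.sum_le_sum fun S _ => pr_noCut_le μ K α hμ hμsum hα0 hα1 hK1 hK0
        hKP m ε η hε0 hε1 hη hm hexp S).trans (le_of_eq ?_))
      exact hcount (fun l => 2 * l ≤ n) (fun l => missBound μ K α P ε l ^ (n - l))
    · rintro c ⟨S, hS1, hS2⟩
      exact ⟨S, by simpa using hS1, hS2⟩

end Core

/-! ### Bounds for the individual terms -/

lemma sum_Icc_pow_le (n : ℕ) (ρ : ℝ) (h0 : 0 ≤ ρ) (h1 : ρ ≤ 1 / 2) :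
    ∑ l ∈ Finset.Icc 1 n, ρ ^ l ≤ 2 * ρ := by
  have key : ∑ l ∈ Finset.Icc 1 n, ρ ^ l ≤ 2 * ρ * (1 - ρ ^ n) := by
    induction n with
    | zero => simp
    | succ n ih =>
      rw [Finset.sum_Icc_succ_top (by omega)]
      have h2 : 0 ≤ ρ ^ (n + 1) := pow_nonneg h0 _
      have e1 : ρ * ρ ^ n = ρ ^ (n + 1) := by ring
      nlinarith
  have : 0 ≤ ρ ^ n := pow_nonneg h0 _
  nlinarith

lemma choose_mul_pow_le_exp (N m : ℕ) (x y : ℝ) (hx : 0 ≤ x) (hNx : N * x ≤ m * y) (hy : 0 ≤ y) :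
    (N.choose m : ℝ) * x ^ m ≤ y ^ m * Real.exp m := by
  have h1 : (N.choose m : ℝ) ≤ (N : ℝ) ^ m / m.factorial := Nat.choose_le_pow_div m N
  have h2 : (m : ℝ) ^ m / m.factorial ≤ Real.exp m :=
    Real.pow_div_factorial_le_exp (m : ℝ) (Nat.cast_nonneg _) m
  have hf : (0 : ℝ) < m.factorial := by exact_mod_cast Nat.factorial_pos m
  calc (N.choose m : ℝ) * x ^ m ≤ (N : ℝ) ^ m / m.factorial * x ^ m :=
        mul_le_mul_of_nonneg_right h1 (pow_nonneg hx _)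
    _ = (N * x) ^ m / m.factorial := by rw [mul_pow]; ring
    _ ≤ (m * y) ^ m / m.factorial := by
        refine div_le_div_of_nonneg_right (pow_le_pow_left₀ (by positivity) hNx _) hf.le
    _ = y ^ m * ((m : ℝ) ^ m / m.factorial) := by rw [mul_pow]; ring
    _ ≤ _ := mul_le_mul_of_nonneg_left h2 (pow_nonneg hy _)

/-- Expected number of sets of `l` vertices whose rings fit into `m` keys. The linear lower bound
on the pool size absorbs the factor `n.choose l`. -/
lemma small_union_term (n l m P K : ℕ) (ε σ : ℝ) (hε0 : 0 < ε) (hσ : 0 < σ)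
    (hP0 : 0 < P) (hσP : σ * n ≤ P) (hεK : 2 ≤ ε * K) (hm1 : (m : ℝ) ≤ (1 - ε) * l * K)
    (hm2 : (m : ℝ) ≤ Real.exp (-(8 / ε)) * P) :
    (n.choose l : ℝ) * (P.choose m * (((m : ℝ) / P) ^ K) ^ l)
      ≤ (Real.exp 1 / σ * Real.exp (-(2 * K))) ^ l := by
  have hP : (0 : ℝ) < P := by exact_mod_cast hP0
  have hl : (0 : ℝ) ≤ l := Nat.cast_nonneg _
  have hKr : (0 : ℝ) ≤ K := Nat.cast_nonneg _
  have hml : (m : ℝ) + l ≤ l * K - ε * l * K / 2 := by nlinarith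
  have hml' : m + l ≤ l * K := by
    have : (m : ℝ) + l ≤ l * K := by
      have : 0 ≤ ε * l * K := by positivity
      linarith
    exact_mod_cast this
  obtain ⟨d, hd⟩ : ∃ d, l * K = m + l + d := ⟨l * K - (m + l), by omega⟩
  have hd' : (l : ℝ) * K = m + l + d := by exact_mod_cast hd
  have hdge : ε * l * K / 2 ≤ d := by linarith
  set x : ℝ := (m : ℝ) / P with hx
  have hx0 : 0 ≤ x := by positivity
  have hxη : x ≤ Real.exp (-(8 / ε)) := by rwa [hx, div_le_iff₀ hP]
  have e0 : (x ^ K) ^ l = x ^ m * x ^ l * x ^ d := by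
    rw [← pow_mul, mul_comm K l, hd, pow_add, pow_add]
  have b1 : (P.choose m : ℝ) * x ^ m ≤ Real.exp m := by
    have := choose_mul_pow_le_exp P m x 1 hx0 (by rw [hx]; field_simp; rfl) zero_le_one
    simpa using this
  have hmK : (m : ℝ) ≤ l * K := by
    have : 0 ≤ ε * l * K := by positivity
    nlinarith
  have b2 : (n.choose l : ℝ) * x ^ l ≤ (K / σ) ^ l * Real.exp l := by
    refine choose_mul_pow_le_exp n l x (K / σ) hx0 ?_ (by positivity)
    rw [hx, mul_div_assoc', mul_div_assoc', div_le_div_iff₀ hP hσ]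
    have hn0 : (0 : ℝ) ≤ n := Nat.cast_nonneg _
    have hm0 : (0 : ℝ) ≤ m := Nat.cast_nonneg _
    calc (n : ℝ) * m * σ = (σ * n) * m := by ring
      _ ≤ P * (l * K) := mul_le_mul hσP hmK hm0 hP.le
      _ = _ := by ring
  have b3 : x ^ d ≤ Real.exp (-(4 * K)) ^ l := by
    calc x ^ d ≤ Real.exp (-(8 / ε)) ^ d := pow_le_pow_left₀ hx0 hxη _
      _ = Real.exp (d * (-(8 / ε))) := by rw [← Real.exp_nat_mul]
      _ ≤ Real.exp (l * (-(4 * K))) := by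
          apply Real.exp_le_exp.2
          have : (8 / ε) * (ε * l * K / 2) ≤ (8 / ε) * d :=
            mul_le_mul_of_nonneg_left hdge (by positivity)
          have e : (8 / ε) * (ε * l * K / 2) = 4 * l * K := by field_simp; ring
          nlinarith
      _ = _ := by rw [← Real.exp_nat_mul]
  have b4 : Real.exp m ≤ Real.exp K ^ l := by
    rw [← Real.exp_nat_mul]; exact Real.exp_le_exp.2 hmK
  have b5 : ((K : ℝ) / σ) ^ l ≤ (Real.exp K / σ) ^ l := by
    refine pow_le_pow_left₀ (by positivity) ?_ _
    refine div_le_div_of_nonneg_right ?_ hσ.le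
    linarith [Real.add_one_le_exp (K : ℝ)]
  calc (n.choose l : ℝ) * (P.choose m * (x ^ K) ^ l)
      = (P.choose m * x ^ m) * (n.choose l * x ^ l) * x ^ d := by rw [e0]; ring
    _ ≤ Real.exp K ^ l * ((Real.exp K / σ) ^ l * Real.exp l) * Real.exp (-(4 * K)) ^ l := by
        refine mul_le_mul (mul_le_mul (b1.trans b4) (b2.trans ?_) (by positivity) (by positivity))
          b3 (by positivity) (by positivity)
        exact mul_le_mul_of_nonneg_right b5 (Real.exp_pos _).le
    _ = _ := by
        have e1 : Real.exp (l : ℝ) = Real.exp 1 ^ l := by rw [← Real.exp_nat_mul, mul_one]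
        rw [e1, ← mul_pow, ← mul_pow, ← mul_pow]
        congr 1
        have e2 : Real.exp (-(2 * (K : ℝ))) = Real.exp K * Real.exp K * Real.exp (-(4 * K)) := by
          rw [← Real.exp_add, ← Real.exp_add]; congr 1; ring
        rw [e2]; ring

section MissBound

variable {r : ℕ} (μ : Fin (r + 1) → ℝ) (K : Fin (r + 1) → ℕ) (α : ℝ) (P : ℕ) (ε : ℝ)

lemma one_sub_pow_le_exp (y : ℝ) (hy : y ≤ 1) (l : ℕ) : (1 - y) ^ l ≤ Real.exp (-(l * y)) := by
  calc (1 - y) ^ l ≤ Real.exp (-y) ^ l :=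
        pow_le_pow_left₀ (by linarith) (by linarith [Real.add_one_le_exp (-y)]) _
    _ = _ := by rw [← Real.exp_nat_mul]; congr 1; ring

lemma link_bounds (hα0 : 0 ≤ α) (hα1 : α ≤ 1) (hε0 : 0 ≤ ε) (hε1 : ε ≤ 1) (j : Fin (r + 1)) :
    0 ≤ α * ((1 - ε) * pEdge P (K 0) (K j)) ∧ α * ((1 - ε) * pEdge P (K 0) (K j)) ≤ 1 := by
  have hp0 := pEdge_nonneg P (K 0) (K j)
  have hp1 := pEdge_le_one P (K 0) (K j)
  have h2 : (1 - ε) * pEdge P (K 0) (K j) ≤ 1 := by nlinarith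
  have h2' : 0 ≤ (1 - ε) * pEdge P (K 0) (K j) := mul_nonneg (by linarith) hp0
  exact ⟨mul_nonneg hα0 h2', by nlinarith⟩

lemma missBound_nonneg (hμ : ∀ i, 0 ≤ μ i) (hα0 : 0 ≤ α) (hα1 : α ≤ 1) (hε0 : 0 ≤ ε) (hε1 : ε ≤ 1)
    (l : ℕ) : 0 ≤ missBound μ K α P ε l := by
  unfold missBound
  refine Finset.sum_nonneg fun j _ => mul_nonneg (hμ j) ?_
  have h := link_bounds K α P ε hα0 hα1 hε0 hε1 j
  have := mul_nonneg (by linarith : 0 ≤ 1 - ε) (pow_nonneg (by linarith [h.2] : 0 ≤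
      1 - α * ((1 - ε) * pEdge P (K 0) (K j))) l)
  linarith

lemma missBound_le_exp (hμ : ∀ i, 0 ≤ μ i) (hα0 : 0 ≤ α) (hα1 : α ≤ 1)
    (hε0 : 0 ≤ ε) (hε1 : ε ≤ 1) (l : ℕ) :
    missBound μ K α P ε l ≤ ∑ j, μ j * (ε + (1 - ε) *
      Real.exp (-(l * (α * ((1 - ε) * pEdge P (K 0) (K j)))))) := by
  unfold missBound
  refine Finset.sum_le_sum fun j _ => mul_le_mul_of_nonneg_left ?_ (hμ j)
  have h := one_sub_pow_le_exp _ (link_bounds K α P ε hα0 hα1 hε0 hε1 j).2 l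
  have := mul_le_mul_of_nonneg_left h (by linarith : 0 ≤ 1 - ε)
  linarith

/-- Sharp bound for sets so small that `l Λ₁` is small. -/
lemma missBound_small (hμ : ∀ i, 0 ≤ μ i) (hμsum : ∑ i, μ i = 1) (hα0 : 0 ≤ α) (hα1 : α ≤ 1)
    (hε0 : 0 ≤ ε) (hε1 : ε ≤ 1) (m0 : ℝ) (hm0 : 0 < m0) (hmin : ∀ j, m0 ≤ μ j) (l : ℕ)
    (hl : l * (α * lamb μ K P 0) ≤ ε * m0) :
    missBound μ K α P ε l ≤ Real.exp (-((1 - ε) ^ 3 * (l * (α * lamb μ K P 0)))) := by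
  have hl0 : (0 : ℝ) ≤ l := Nat.cast_nonneg _
  have hp0 : ∀ j, 0 ≤ pEdge P (K 0) (K j) := fun j => pEdge_nonneg _ _ _
  have hle : ∀ j, l * (α * pEdge P (K 0) (K j)) ≤ ε := by
    intro j
    have h1 : μ j * pEdge P (K 0) (K j) ≤ lamb μ K P 0 :=
      Finset.single_le_sum (f := fun j => μ j * pEdge P (K 0) (K j))
        (fun i _ => mul_nonneg (hμ i) (hp0 i)) (Finset.mem_univ j)
    have h2 : m0 * pEdge P (K 0) (K j) ≤ lamb μ K P 0 :=
      (mul_le_mul_of_nonneg_right (hmin j) (hp0 j)).trans h1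
    have h3 : (l * α) * (m0 * pEdge P (K 0) (K j)) ≤ (l * α) * lamb μ K P 0 :=
      mul_le_mul_of_nonneg_left h2 (by positivity)
    have h4 : m0 * (l * (α * pEdge P (K 0) (K j))) ≤ m0 * ε := by linarith
    exact le_of_mul_le_mul_left h4 hm0
  have hterm : ∀ j, Real.exp (-(l * (α * ((1 - ε) * pEdge P (K 0) (K j)))))
      ≤ 1 - (1 - ε) ^ 2 * (l * (α * pEdge P (K 0) (K j))) := by
    intro j
    set t := l * (α * pEdge P (K 0) (K j)) with ht
    have ht0 : 0 ≤ t := by have := hp0 j; positivity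
    have e : l * (α * ((1 - ε) * pEdge P (K 0) (K j))) = (1 - ε) * t := by rw [ht]; ring
    rw [e]
    have hs0 : 0 ≤ (1 - ε) * t := mul_nonneg (by linarith) ht0
    have hsε : (1 - ε) * t ≤ ε := by nlinarith [hle j]
    have h := Real.abs_exp_sub_one_sub_id_le (x := -((1 - ε) * t)) (by
      rw [abs_neg, abs_of_nonneg hs0]; linarith)
    have h' := (abs_le.1 h).2
    nlinarith
  refine (missBound_le_exp μ K α P ε hμ hα0 hα1 hε0 hε1 l).trans ?_
  calc _ ≤ ∑ j, (μ j - (1 - ε) ^ 3 * (l * (α * (μ j * pEdge P (K 0) (K j))))) := by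
        refine Finset.sum_le_sum fun j _ => ?_
        have h1 := mul_le_mul_of_nonneg_left (hterm j) (by linarith : 0 ≤ 1 - ε)
        have h2 := mul_le_mul_of_nonneg_left h1 (hμ j)
        nlinarith
    _ = 1 - (1 - ε) ^ 3 * (l * (α * lamb μ K P 0)) := by
        rw [Finset.sum_sub_distrib, hμsum, lamb, Finset.mul_sum, Finset.mul_sum, Finset.mul_sum]
    _ ≤ _ := by
        linarith [Real.add_one_le_exp (-((1 - ε) ^ 3 * (l * (α * lamb μ K P 0))))]

lemma missBound_medium (hμ : ∀ i, 0 ≤ μ i) (hμsum : ∑ i, μ i = 1) (hα0 : 0 ≤ α) (hα1 : α ≤ 1)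
    (hε0 : 0 ≤ ε) (hε1 : ε ≤ 1) (m0 : ℝ) (hmin : ∀ j, m0 ≤ μ j) (l : ℕ)
    (τ : ℝ) (hτ : 0 ≤ τ) (hl : τ ≤ l * (α * lamb μ K P 0)) :
    missBound μ K α P ε l
      ≤ Real.exp (-((1 - ε) * m0 * (1 - Real.exp (-((1 - ε) * τ))))) := by
  have hl0 : (0 : ℝ) ≤ l := Nat.cast_nonneg _
  have hp0 : ∀ j, 0 ≤ pEdge P (K 0) (K j) := fun j => pEdge_nonneg _ _ _
  have hex : ∃ j, lamb μ K P 0 ≤ pEdge P (K 0) (K j) := by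
    by_contra hcon
    push Not at hcon
    have : ∑ j, μ j * pEdge P (K 0) (K j) < ∑ j, μ j * lamb μ K P 0 := by
      obtain ⟨j0, hj0⟩ : ∃ j, 0 < μ j := by
        by_contra h
        push Not at h
        have : ∑ i, μ i ≤ 0 := Finset.sum_nonpos fun i _ => h i
        linarith
      refine Finset.sum_lt_sum (fun j _ => mul_le_mul_of_nonneg_left (hcon j).le (hμ j))
        ⟨j0, Finset.mem_univ _, mul_lt_mul_of_pos_left (hcon j0) hj0⟩
    rw [← Finset.sum_mul, hμsum, one_mul] at this
    exact lt_irrefl _ this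
  obtain ⟨j0, hj0⟩ := hex
  set g : Fin (r + 1) → ℝ := fun j =>
    1 - Real.exp (-(l * (α * ((1 - ε) * pEdge P (K 0) (K j))))) with hg
  have hg0 : ∀ j, 0 ≤ g j := by
    intro j
    have h := (link_bounds K α P ε hα0 hα1 hε0 hε1 j).1
    have : Real.exp (-(l * (α * ((1 - ε) * pEdge P (K 0) (K j))))) ≤ 1 :=
      Real.exp_le_one_iff.2 (by have := mul_nonneg hl0 h; linarith)
    simp only [hg]; linarith
  have hgj0 : 1 - Real.exp (-((1 - ε) * τ)) ≤ g j0 := by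
    simp only [hg]
    have : Real.exp (-(l * (α * ((1 - ε) * pEdge P (K 0) (K j0))))) ≤ Real.exp (-((1 - ε) * τ)) := by
      apply Real.exp_le_exp.2
      have h1 : (l * α) * lamb μ K P 0 ≤ (l * α) * pEdge P (K 0) (K j0) :=
        mul_le_mul_of_nonneg_left hj0 (by positivity)
      have h2 : τ ≤ (l * α) * pEdge P (K 0) (K j0) := by linarith
      have h3 := mul_le_mul_of_nonneg_left h2 (by linarith : 0 ≤ 1 - ε)
      linarith
    linarith
  have hz : 0 ≤ 1 - Real.exp (-((1 - ε) * τ)) := by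
    have : Real.exp (-((1 - ε) * τ)) ≤ 1 :=
      Real.exp_le_one_iff.2 (by have := mul_nonneg (by linarith : 0 ≤ 1 - ε) hτ; linarith)
    linarith
  have hsum : m0 * (1 - Real.exp (-((1 - ε) * τ))) ≤ ∑ j, μ j * g j := by
    calc _ ≤ μ j0 * g j0 := mul_le_mul (hmin j0) hgj0 hz (hμ j0)
      _ ≤ _ := Finset.single_le_sum (f := fun j => μ j * g j)
        (fun i _ => mul_nonneg (hμ i) (hg0 i)) (Finset.mem_univ j0)
  refine (missBound_le_exp μ K α P ε hμ hα0 hα1 hε0 hε1 l).trans ?_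
  calc _ = ∑ j, (μ j - (1 - ε) * (μ j * g j)) := by
        refine Finset.sum_congr rfl fun j _ => ?_
        simp only [hg]; ring
    _ = 1 - (1 - ε) * ∑ j, μ j * g j := by
        rw [Finset.sum_sub_distrib, hμsum, Finset.mul_sum]
    _ ≤ 1 - (1 - ε) * (m0 * (1 - Real.exp (-((1 - ε) * τ)))) := by
        have := mul_le_mul_of_nonneg_left hsum (by linarith : 0 ≤ 1 - ε)
        linarith
    _ ≤ _ := by
        have := Real.add_one_le_exp (-((1 - ε) * m0 * (1 - Real.exp (-((1 - ε) * τ)))))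
        linarith

lemma missBound_large (hμ : ∀ i, 0 ≤ μ i) (hμsum : ∑ i, μ i = 1) (hα0 : 0 ≤ α) (hα1 : α ≤ 1)
    (hε0 : 0 ≤ ε) (hε1 : ε ≤ 1) (hK0 : ∀ j, K 0 ≤ K j) (hKP : ∀ j, K j ≤ P) (l : ℕ) :
    missBound μ K α P ε l ≤ ε + Real.exp (-(l * (α * ((1 - ε) * pEdge P (K 0) (K 0))))) := by
  have hl0 : (0 : ℝ) ≤ l := Nat.cast_nonneg _
  refine (missBound_le_exp μ K α P ε hμ hα0 hα1 hε0 hε1 l).trans ?_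
  set E := Real.exp (-(l * (α * ((1 - ε) * pEdge P (K 0) (K 0))))) with hE
  have hE0 : 0 < E := Real.exp_pos _
  calc _ ≤ ∑ j, μ j * (ε + E) := by
        refine Finset.sum_le_sum fun j _ => mul_le_mul_of_nonneg_left ?_ (hμ j)
        have hp : pEdge P (K 0) (K 0) ≤ pEdge P (K 0) (K j) := by
          unfold pEdge
          linarith [avoidProb_anti_right P (K 0) (K 0) (K j) (hK0 j) (hKP j)]
        have h1 : Real.exp (-(l * (α * ((1 - ε) * pEdge P (K 0) (K j))))) ≤ E := by
          apply Real.exp_le_exp.2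
          have := mul_le_mul_of_nonneg_left hp (by
            have : 0 ≤ 1 - ε := by linarith
            positivity : 0 ≤ l * (α * (1 - ε)))
          linarith
        have h0 := Real.exp_pos (-(l * (α * ((1 - ε) * pEdge P (K 0) (K j)))))
        nlinarith
    _ = ε + E := by rw [← Finset.sum_mul, hμsum, one_mul]

end MissBound

/-! ### Asymptotics -/

/-- Sets so small that a vertex outside typically has no edge to them: here the constant in the
connectivity threshold decides. -/
lemma cut_term_small (n l : ℕ) (M ε κ cn Λ : ℝ) (hn : 2 ≤ n) (hM0 : 0 ≤ M)
    (hε1 : ε ≤ 1) (hlε : l ≤ ε * n)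
    (hΛ : Λ = cn * Real.log n / n) (hcn : 1 + κ ≤ (1 - ε) ^ 4 * cn) (hcn0 : 0 ≤ cn)
    (hM : M ≤ Real.exp (-((1 - ε) ^ 3 * (l * Λ)))) :
    (n.choose l : ℝ) * M ^ (n - l) ≤ Real.exp (-(κ * Real.log n)) ^ l := by
  have hn0 : (0 : ℝ) < n := by positivity
  have hln : l ≤ n := by
    have : (l : ℝ) ≤ n := hlε.trans (by nlinarith)
    exact_mod_cast this
  have hlog : 0 ≤ Real.log n := Real.log_natCast_nonneg n
  have h1 : (n.choose l : ℝ) ≤ Real.exp (l * Real.log n) := by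
    have h : (n.choose l : ℝ) ≤ (n : ℝ) ^ l := by exact_mod_cast Nat.choose_le_pow n l
    refine h.trans (le_of_eq ?_)
    rw [Real.exp_nat_mul, Real.exp_log hn0]
  have h2 : M ^ (n - l) ≤ Real.exp (-((1 + κ) * Real.log n * l)) := by
    refine (pow_le_pow_left₀ hM0 hM _).trans ?_
    rw [← Real.exp_nat_mul]
    apply Real.exp_le_exp.mpr
    rw [Nat.cast_sub hln]
    have hnΛ : Λ * n = cn * Real.log n := by rw [hΛ]; field_simp
    have hΛ0 : 0 ≤ Λ := by rw [hΛ]; positivity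
    have ha : (1 - ε) * n ≤ (n : ℝ) - l := by linarith
    have hX : 0 ≤ (1 - ε) ^ 3 * (l * Λ) := by
      have : 0 ≤ 1 - ε := by linarith
      positivity
    have hb := mul_le_mul_of_nonneg_right ha hX
    have hc : (1 - ε) * n * ((1 - ε) ^ 3 * (l * Λ)) = (1 - ε) ^ 4 * cn * (Real.log n * l) := by
      calc _ = (1 - ε) ^ 4 * l * (Λ * n) := by ring
        _ = _ := by rw [hnΛ]; ring
    have hd := mul_le_mul_of_nonneg_right hcn (show 0 ≤ Real.log n * l by positivity)
    nlinarith
  calc _ ≤ Real.exp (l * Real.log n) * Real.exp (-((1 + κ) * Real.log n * l)) :=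
        mul_le_mul h1 h2 (pow_nonneg hM0 _) (Real.exp_pos _).le
    _ = _ := by
        rw [← Real.exp_add, ← Real.exp_nat_mul]
        congr 1; ring

/-- Sets of intermediate size, at most a small multiple of `n`: the entropy of the choice of the set
is beaten by a constant factor lost at every outside vertex. -/
lemma cut_term_medium (n l : ℕ) (M a : ℝ) (hM0 : 0 ≤ M) (ha0 : 0 < a) (ha1 : a ≤ 1)
    (hl2 : 2 * l ≤ n) (hlδ : l ≤ a / (8 * Real.log (8 / a)) * n) (hM : M ≤ Real.exp (-a)) :
    (n.choose l : ℝ) * M ^ (n - l) ≤ Real.exp (-(a / 4)) ^ n := by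
  have hlog : 0 < Real.log (8 / a) := Real.log_pos (by rw [lt_div_iff₀ ha0]; linarith)
  have h1 : (n.choose l : ℝ) * (a / 8) ^ l ≤ Real.exp (n * (a / 8)) := by
    have hsum : (n.choose l : ℝ) * (a / 8) ^ l ≤ (a / 8 + 1) ^ n := by
      rw [add_pow]
      have := Finset.single_le_sum
        (f := fun m => (a / 8) ^ m * 1 ^ (n - m) * (n.choose m : ℝ))
        (s := Finset.range (n + 1)) (fun i _ => by positivity)
        (Finset.mem_range.mpr (show l < n + 1 by omega))
      simpa [mul_comm] using this
    refine hsum.trans ?_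
    rw [Real.exp_nat_mul]
    exact pow_le_pow_left₀ (by positivity) (Real.add_one_le_exp _) _
  have h2 : (8 / a) ^ l ≤ Real.exp (n * (a / 8)) := by
    have e : (8 / a) ^ l = Real.exp (l * Real.log (8 / a)) := by
      rw [Real.exp_nat_mul, Real.exp_log (by positivity)]
    rw [e]
    apply Real.exp_le_exp.mpr
    calc (l : ℝ) * Real.log (8 / a) ≤ a / (8 * Real.log (8 / a)) * n * Real.log (8 / a) :=
          mul_le_mul_of_nonneg_right hlδ hlog.le
      _ = _ := by field_simp
  have h3 : (n.choose l : ℝ) ≤ Real.exp (n * (a / 8)) * Real.exp (n * (a / 8)) := by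
    calc (n.choose l : ℝ) = (n.choose l * (a / 8) ^ l) * (8 / a) ^ l := by
          rw [mul_assoc, ← mul_pow, show a / 8 * (8 / a) = 1 by field_simp, one_pow, mul_one]
      _ ≤ _ := mul_le_mul h1 h2 (by positivity) (Real.exp_pos _).le
  have h4 : M ^ (n - l) ≤ Real.exp (-(n * (a / 2))) := by
    refine (pow_le_pow_left₀ hM0 hM _).trans ?_
    rw [← Real.exp_nat_mul]
    apply Real.exp_le_exp.mpr
    have hl2' : (2 : ℝ) * l ≤ n := by exact_mod_cast hl2
    rw [Nat.cast_sub (by omega)]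
    nlinarith
  calc _ ≤ Real.exp (n * (a / 8)) * Real.exp (n * (a / 8)) * Real.exp (-(n * (a / 2))) :=
        mul_le_mul h3 h4 (pow_nonneg hM0 _) (by positivity)
    _ = _ := by
        rw [← Real.exp_add, ← Real.exp_add, ← Real.exp_nat_mul]
        congr 1; ring

/-- Sets of linear size: the trivial bound `2 ^ n` on the number of sets suffices. -/
lemma cut_term_large (n l : ℕ) (M : ℝ) (hM0 : 0 ≤ M) (hl2 : 2 * l ≤ n) (hM : M ≤ 1 / 16) :
    (n.choose l : ℝ) * M ^ (n - l) ≤ (1 / 2) ^ n := by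
  have h1 : (n.choose l : ℝ) ≤ 2 ^ n := by exact_mod_cast Nat.choose_le_two_pow n l
  have h2 : M ^ (n - l) ≤ (1 / 4) ^ n := by
    calc M ^ (n - l) ≤ ((1 / 4) ^ 2) ^ (n - l) := pow_le_pow_left₀ hM0 (by norm_num; linarith) _
      _ = (1 / 4) ^ (2 * (n - l)) := by rw [pow_mul]
      _ ≤ _ := pow_le_pow_of_le_one (by norm_num) (by norm_num) (by omega)
  calc _ ≤ (2 : ℝ) ^ n * (1 / 4) ^ n := mul_le_mul h1 h2 (pow_nonneg hM0 _) (by positivity)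
    _ = _ := by rw [← mul_pow]; norm_num

/-- The constants of the argument: `ε` is the tolerated loss in the number of keys, `κ` the margin
left above the connectivity threshold. -/
lemma exists_eps (c : ℝ) (hc : 1 < c) :
    ∃ ε κ : ℝ, 0 < ε ∧ ε ≤ 1 / 32 ∧ 0 < κ ∧ 1 + κ < (1 - ε) ^ 4 * c := by
  refine ⟨min (1 / 32) ((c - 1) / (8 * c)), (c - 1) / 4, ?_, min_le_left _ _, by linarith, ?_⟩
  · have : 0 < (c - 1) / (8 * c) := div_pos (by linarith) (by linarith)
    exact lt_min (by norm_num) this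
  · set ε := min (1 / 32) ((c - 1) / (8 * c)) with hε
    have h1 : ε ≤ 1 / 32 := min_le_left _ _
    have h2 : ε * (8 * c) ≤ c - 1 := by
      have := min_le_right (1 / 32) ((c - 1) / (8 * c))
      rwa [← hε, le_div_iff₀ (by linarith)] at this
    have h3 : 1 - 4 * ε ≤ (1 - ε) ^ 4 := by
      have := one_add_mul_le_pow (a := -ε) (by linarith) 4
      rw [show 1 + -ε = 1 - ε by ring] at this
      push_cast at this
      linarith
    have h4 := mul_le_mul_of_nonneg_right h3 (show 0 ≤ c by linarith)
    nlinarith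

/-- The smallest rings grow without bound: `n α p₁₁ ≤ 2 K₁ ^ 2 / σ` because `P ≥ σ n`. -/
lemma tendsto_ring_size {r : ℕ} (K : ℕ → Fin (r + 1) → ℕ) (P : ℕ → ℕ) (α : ℕ → ℝ)
    (hK1 : ∀ n, 1 ≤ K n 0) (hKP : ∀ n, 2 * K n 0 ≤ P n) (hα : ∀ n, α n ∈ Set.Ioo (0 : ℝ) 1)
    (σ : ℝ) (hσ : 0 < σ) (hP : ∀ n, σ * n ≤ (P n : ℝ))
    (hp11 : Tendsto (fun n : ℕ => (n : ℝ) * α n * pEdge (P n) (K n 0) (K n 0)) atTop atTop) :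
    Tendsto (fun n => (K n 0 : ℝ)) atTop atTop := by
  rw [tendsto_atTop]
  intro b
  filter_upwards [hp11.eventually_ge_atTop (2 * b ^ 2 / σ)] with n hn
  have hk := hKP n
  have hk1 := hK1 n
  have hP0 : (0 : ℝ) < P n := by exact_mod_cast (show 0 < P n by omega)
  have h1 := pEdge_le (P n) (K n 0) (K n 0) hk (by omega) (by omega)
  have h0 := pEdge_nonneg (P n) (K n 0) (K n 0)
  have h2 : (n : ℝ) * α n * pEdge (P n) (K n 0) (K n 0) ≤ 2 * (K n 0 : ℝ) ^ 2 / σ := by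
    calc (n : ℝ) * α n * pEdge (P n) (K n 0) (K n 0)
        ≤ n * 1 * (2 * (K n 0) * (K n 0) / P n) := by
          refine mul_le_mul (mul_le_mul_of_nonneg_left (hα n).2.le (by positivity)) h1 h0
            (by positivity)
      _ ≤ _ := by
          rw [mul_one, mul_div_assoc', div_le_div_iff₀ hP0 hσ]
          have := mul_le_mul_of_nonneg_left (hP n) (show 0 ≤ 2 * (K n 0 : ℝ) ^ 2 by positivity)
          nlinarith
  have h3 := hn.trans h2
  rw [div_le_div_iff_of_pos_right hσ] at h3
  exact (le_abs_self b).trans (abs_le_of_sq_le_sq (by linarith) (by positivity))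

/-- one-law for connectivity:
under the scaling `Λ₁(n) = αₙ λ₁(n) = cₙ log n / n` with `cₙ → c > 1`, together with
`Pₙ ≥ σ n` for some `σ > 0` and `p₁₁(n) = ω(1/(n αₙ))`, the probability that
`G(n; μ, Kₙ, Pₙ, αₙ)` is connected tends to `1`. -/
theorem connectivity_one_law {r : ℕ} (μ : Fin (r + 1) → ℝ)
    (hμpos : ∀ i, 0 < μ i) (hμsum : ∑ i, μ i = 1)
    (K : ℕ → Fin (r + 1) → ℕ) (P : ℕ → ℕ) (α : ℕ → ℝ)
    (hK1 : ∀ n, 1 ≤ K n 0) (hKmono : ∀ n, Monotone (K n))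
    (hKP : ∀ n, 2 * K n (Fin.last r) ≤ P n)
    (hα : ∀ n, α n ∈ Set.Ioo (0 : ℝ) 1)
    (cseq : ℕ → ℝ) (c : ℝ)
    (hscal : ∀ n, 2 ≤ n → α n * lamb μ (K n) (P n) 0 = cseq n * Real.log n / n)
    (hc : Tendsto cseq atTop (nhds c)) (hcgt : 1 < c)
    (σ : ℝ) (hσ : 0 < σ) (hP : ∀ n, σ * n ≤ (P n : ℝ))
    (hp11 : Tendsto (fun n : ℕ => (n : ℝ) * α n * pEdge (P n) (K n 0) (K n 0)) atTop atTop) :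
    Tendsto (fun n => pr μ (K n) (α n) (fun cfg : Config n r (P n) => (graphOf cfg).Connected))
      atTop (nhds 1) := by
  classical
  obtain ⟨ε, κ, hε0, hε32, hκ, hκc⟩ := exists_eps c hcgt
  have hμ : ∀ i, 0 ≤ μ i := fun i => (hμpos i).le
  obtain ⟨m0, hm0, hmin⟩ : ∃ m0 : ℝ, 0 < m0 ∧ ∀ j, m0 ≤ μ j := by
    obtain ⟨i, -, hi⟩ := Finset.exists_min_image Finset.univ μ Finset.univ_nonempty
    exact ⟨μ i, hμpos i, fun j => hi j (Finset.mem_univ j)⟩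
  have hm01 : m0 ≤ 1 :=
    (hmin 0).trans (hμsum ▸ Finset.single_le_sum (fun i _ => hμ i) (Finset.mem_univ 0))
  have hε1 : ε ≤ 1 := by linarith
  have h1ε : 0 < 1 - ε := by linarith
  set η : ℝ := Real.exp (-(8 / ε)) with hη
  have hη0 : 0 < η := Real.exp_pos _
  have hη1 : η ≤ 1 := Real.exp_le_one_iff.mpr (neg_nonpos.mpr (by positivity))
  set τ : ℝ := ε * m0 with hτ
  have hτ0 : 0 < τ := by positivity
  set a : ℝ := (1 - ε) * m0 * (1 - Real.exp (-((1 - ε) * τ))) with ha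
  have hexpτ : Real.exp (-((1 - ε) * τ)) < 1 :=
    Real.exp_lt_one_iff.mpr (neg_lt_zero.mpr (mul_pos h1ε hτ0))
  have ha0 : 0 < a := mul_pos (by positivity) (by linarith)
  have ha1 : a ≤ 1 := by
    have h1 : (1 - ε) * m0 ≤ 1 := mul_le_one₀ (by linarith) hm0.le hm01
    have h2 := Real.exp_pos (-((1 - ε) * τ))
    exact mul_le_one₀ h1 (by linarith) (by linarith)
  set δ : ℝ := a / (8 * Real.log (8 / a)) with hδ
  have hδ0 : 0 < δ :=
    div_pos ha0 (mul_pos (by norm_num) (Real.log_pos (by rw [lt_div_iff₀ ha0]; linarith)))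
  have hK0 : ∀ n j, K n 0 ≤ K n j := fun n j => hKmono n (Fin.zero_le j)
  have hK2P : ∀ n j, 2 * K n j ≤ P n := fun n j => by
    have h1 := hKmono n (Fin.le_last j)
    have h2 := hKP n
    omega
  have hKleP : ∀ n j, K n j ≤ P n := fun n j => by have := hK2P n j; omega
  have hP0 : ∀ n, 0 < P n := fun n => by
    have h1 := hK1 n
    have h2 := hK2P n 0
    omega
  have hKtop : Tendsto (fun n => (K n 0 : ℝ)) atTop atTop :=
    tendsto_ring_size K P α hK1 (fun n => hK2P n 0) hα σ hσ hP hp11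
  set ρ₁ : ℕ → ℝ := fun n => Real.exp 1 / σ * Real.exp (-(2 * K n 0)) with hρ₁
  set ρ₂ : ℕ → ℝ := fun n => Real.exp (-(κ * Real.log n)) with hρ₂
  set q : ℝ := Real.exp (-(a / 4)) with hq
  have hq1 : q < 1 := Real.exp_lt_one_iff.mpr (by linarith)
  have hρ₁lim : Tendsto ρ₁ atTop (nhds 0) := by
    have h := (Real.tendsto_exp_neg_atTop_nhds_zero.comp
      (hKtop.const_mul_atTop (show (0 : ℝ) < 2 by norm_num))).const_mul (Real.exp 1 / σ)
    simpa [Function.comp_def] using h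
  have hlogtop : Tendsto (fun n : ℕ => Real.log n) atTop atTop :=
    Real.tendsto_log_atTop.comp tendsto_natCast_atTop_atTop
  have hρ₂lim : Tendsto ρ₂ atTop (nhds 0) :=
    Real.tendsto_exp_neg_atTop_nhds_zero.comp (hlogtop.const_mul_atTop hκ)
  have hboundlim : Tendsto (fun n : ℕ => 1 - (2 * ρ₁ n +
      (2 * ρ₂ n + n * q ^ n + n * (1 / 2 : ℝ) ^ n))) atTop (nhds 1) := by
    have h1 := tendsto_self_mul_const_pow_of_lt_one (Real.exp_pos (-(a / 4))).le hq1
    have h2 := tendsto_self_mul_const_pow_of_lt_one (r := 1 / 2) (by norm_num) (by norm_num)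
    have h3 := ((hρ₁lim.const_mul 2).add
      (((hρ₂lim.const_mul 2).add h1).add h2)).const_sub (1 : ℝ)
    simpa using h3
  have hupper : ∀ n, pr μ (K n) (α n)
      (fun cfg : Config n r (P n) => (graphOf cfg).Connected) ≤ 1 := fun n => by
    rw [pr_not μ (K n) (α n) hμsum (hKleP n)]
    have : 0 ≤ pr μ (K n) (α n)
        (fun cfg : Config n r (P n) => ¬ (graphOf cfg).Connected) := by
      unfold pr
      refine Finset.sum_nonneg fun cfg _ => ?_
      split_ifs
      · exact wt_nonneg μ (K n) (α n) hμ (hα n).1.le (hα n).2.le cfg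
      · exact le_rfl
    linarith
  refine tendsto_of_tendsto_of_tendsto_of_le_of_le' hboundlim tendsto_const_nhds ?_
    (Eventually.of_forall hupper)
  have hccev : ∀ᶠ n in atTop, 1 + κ < (1 - ε) ^ 4 * cseq n :=
    (hc.const_mul ((1 - ε) ^ 4)).eventually_const_lt hκc
  have hexpev : ∀ᶠ n in atTop, Real.exp (-(η * K n 0)) < ε :=
    (Real.tendsto_exp_neg_atTop_nhds_zero.comp
      (hKtop.const_mul_atTop hη0)).eventually_lt_const hε0
  have hlargeev : ∀ᶠ n : ℕ in atTop, Real.exp (-((δ * (1 - ε)) *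
      ((n : ℝ) * α n * pEdge (P n) (K n 0) (K n 0)))) < 1 / 32 :=
    (Real.tendsto_exp_neg_atTop_nhds_zero.comp
      (hp11.const_mul_atTop (mul_pos hδ0 h1ε))).eventually_lt_const (by norm_num)
  filter_upwards [eventually_ge_atTop 2, hccev, hc.eventually_const_lt hcgt, hexpev, hlargeev,
    hlogtop.eventually_ge_atTop 1, (hKtop.const_mul_atTop hε0).eventually_ge_atTop 2,
    hρ₁lim.eventually_lt_const (show (0 : ℝ) < 1 / 2 by norm_num),
    hρ₂lim.eventually_lt_const (show (0 : ℝ) < 1 / 2 by norm_num)]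
    with n hn hccn hcn hexpn hlarge hlog hεK hρ₁n hρ₂n
  have hα0 := (hα n).1.le
  have hα1 := (hα n).2.le
  have hn0 : (0 : ℝ) < n := by positivity
  have hPr : (0 : ℝ) < P n := by exact_mod_cast hP0 n
  set m : ℕ → ℕ := fun l => ⌊min ((1 - ε) * l * K n 0) (η * P n)⌋₊ with hm
  have hmle : ∀ l, (m l : ℝ) ≤ min ((1 - ε) * l * K n 0) (η * P n) := fun l =>
    Nat.floor_le (le_min (by positivity) (by positivity))
  have hmP : ∀ l, m l ≤ P n := fun l => by
    have h : (m l : ℝ) ≤ P n := ((hmle l).trans (min_le_right _ _)).trans (mul_le_of_le_one_left hPr.le hη1)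
    exact_mod_cast h
  rw [pr_not μ (K n) (α n) hμsum (hKleP n)]
  have hmain := pr_not_connected_le μ (K n) (α n) (n := n) (by omega) hμ hμsum hα0 hα1 (hK1 n)
    (hK0 n) (hKleP n) m ε η hε0.le hε1 hη0.le (fun l => (Nat.lt_floor_add_one _).le) hmP hexpn.le
  have hsum1 : (∑ l ∈ Finset.Icc 1 n, (n.choose l : ℝ) *
      ((P n).choose (m l) * (((m l : ℝ) / P n) ^ K n 0) ^ l)) ≤ 2 * ρ₁ n := by
    refine le_trans (Finset.sum_le_sum fun l _ => ?_)
      (sum_Icc_pow_le n (ρ₁ n) (by positivity) hρ₁n.le)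
    exact small_union_term n l (m l) (P n) (K n 0) ε σ hε0 hσ (hP0 n) (hP n) hεK
      ((hmle l).trans (min_le_left _ _)) ((hmle l).trans (min_le_right _ _))
  have hterm : ∀ l ∈ (Finset.Icc 1 n).filter (fun l => 2 * l ≤ n),
      (n.choose l : ℝ) * missBound μ (K n) (α n) (P n) ε l ^ (n - l)
        ≤ ρ₂ n ^ l + q ^ n + (1 / 2 : ℝ) ^ n := by
    intro l hl
    have hl2 : 2 * l ≤ n := (Finset.mem_filter.mp hl).2
    have hM0 := missBound_nonneg μ (K n) (α n) (P n) ε hμ hα0 hα1 hε0.le hε1 l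
    have p1 : 0 ≤ ρ₂ n ^ l := pow_nonneg (Real.exp_pos _).le _
    have p2 : 0 ≤ q ^ n := pow_nonneg (Real.exp_pos _).le _
    have p3 : (0 : ℝ) ≤ (1 / 2) ^ n := by positivity
    rcases le_total ((l : ℝ) * (α n * lamb μ (K n) (P n) 0)) τ with hA | hA
    · have hM := missBound_small μ (K n) (α n) (P n) ε hμ hμsum hα0 hα1 hε0.le hε1 m0 hm0 hmin l hA
      -- `n Λ = cₙ log n ≥ 1 ≥ m0`, so `l Λ ≤ ε m0` forces `l ≤ ε n`.
      have hlε : (l : ℝ) ≤ ε * n := by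
        rw [hscal n hn, mul_div_assoc', div_le_iff₀ hn0] at hA
        have h1 : 1 ≤ cseq n * Real.log n := one_le_mul_of_one_le_of_one_le hcn.le hlog
        have h2 : (l : ℝ) * 1 ≤ l * (cseq n * Real.log n) :=
          mul_le_mul_of_nonneg_left h1 (Nat.cast_nonneg _)
        have h3 : τ * n ≤ ε * n :=
          mul_le_mul_of_nonneg_right (mul_le_of_le_one_right hε0.le hm01) hn0.le
        linarith
      have := cut_term_small n l _ ε κ (cseq n) _ hn hM0 hε1 hlε (hscal n hn) hccn.le
        (by linarith) hM
      linarith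
    · rcases le_total (l : ℝ) (δ * n) with hB | hB
      · have hM := missBound_medium μ (K n) (α n) (P n) ε hμ hμsum hα0 hα1 hε0.le hε1 m0 hmin l τ
          hτ0.le hA
        have := cut_term_medium n l _ a hM0 ha0 ha1 hl2 hB hM
        linarith
      · have hM := missBound_large μ (K n) (α n) (P n) ε hμ hμsum hα0 hα1 hε0.le hε1 (hK0 n)
          (hKleP n) l
        have hpe := pEdge_nonneg (P n) (K n 0) (K n 0)
        have hexp : Real.exp (-(l * (α n * ((1 - ε) * pEdge (P n) (K n 0) (K n 0))))) ≤ 1 / 32 := by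
          refine le_trans (Real.exp_le_exp.mpr (neg_le_neg ?_)) hlarge.le
          have h := mul_le_mul_of_nonneg_right hB
            (show 0 ≤ α n * ((1 - ε) * pEdge (P n) (K n 0) (K n 0)) by positivity)
          linarith
        have := cut_term_large n l _ hM0 hl2 (by linarith)
        linarith
  have hsum2 : (∑ l ∈ (Finset.Icc 1 n).filter (fun l => 2 * l ≤ n),
      (n.choose l : ℝ) * missBound μ (K n) (α n) (P n) ε l ^ (n - l))
        ≤ 2 * ρ₂ n + n * q ^ n + n * (1 / 2 : ℝ) ^ n := by
    have hpos : ∀ l : ℕ, 0 ≤ ρ₂ n ^ l + q ^ n + (1 / 2 : ℝ) ^ n := fun l => by positivity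
    calc _ ≤ ∑ l ∈ (Finset.Icc 1 n).filter (fun l => 2 * l ≤ n),
          (ρ₂ n ^ l + q ^ n + (1 / 2 : ℝ) ^ n) := Finset.sum_le_sum hterm
      _ ≤ ∑ l ∈ Finset.Icc 1 n, (ρ₂ n ^ l + q ^ n + (1 / 2 : ℝ) ^ n) :=
          Finset.sum_le_sum_of_subset_of_nonneg (Finset.filter_subset _ _) fun l _ _ => hpos l
      _ = (∑ l ∈ Finset.Icc 1 n, ρ₂ n ^ l) + n * q ^ n + n * (1 / 2 : ℝ) ^ n := by
          rw [Finset.sum_add_distrib, Finset.sum_add_distrib]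
          simp
      _ ≤ _ := by
          have := sum_Icc_pow_le n (ρ₂ n) (Real.exp_pos _).le hρ₂n.le
          linarith
  linarith
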